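/- arXiv:math/0207051 — 5 statements merged into one kernel-verified Lean document; each statement's English description precedes it below -/
import Mathlib

section
/- Let f, g ∈ L¹(ℝ) be nonnegative with the same 3-deck. If the set {ξ ∈ ℝ : f̂(ξ) = 0} has Lebesgue measure zero, then g is a translate of f, i.e., there exists a ∈ ℝ with g(x) = f(x − a) for almost every x. -/
/-!
The Fourier transform of the 3-deck `N_f` at `(ξ, η)` is `f̂(ξ) f̂(η) f̂(-ξ-η)`
(`integral_deck`), so equal 3-decks give
`f̂(ξ) f̂(η) f̂(-ξ-η) = ĝ(ξ) ĝ(η) ĝ(-ξ-η)` for all `ξ`, `η`. At `ξ = η = 0` this yields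
`f̂(0) = ĝ(0)`, a real number that is nonzero because `f ≥ 0` is not a.e. zero; at `η = -ξ` it then
yields `|f̂| = |ĝ|`. Hence `φ = ĝ / f̂` is unimodular off the null set `{f̂ = 0}` and satisfies
`φ(ξ + η) = φ(ξ) φ(η)` whenever the three values are nonzero.

Such a `φ` coincides off its zeros with a character `ξ ↦ exp (i b ξ)`
(`exists_character_of_ae_mul`). Since `f̂` and `ĝ` have the same zeros, `ĝ(ξ) = exp (i b ξ) f̂(ξ)`
everywhere, and uniqueness of the Fourier transform (`ae_eq_of_ft_eq`) makes `g` a translate of `f`.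
-/

open MeasureTheory
open scoped FourierTransform
open Filter Topology

/-! ### Characters of the real line -/

/-- A bounded measurable function on `ℝ` that is multiplicative off its null zero set is, off
that set, a unitary character. Averaging over `[0, δ]` gives a continuous representative `χ`,
which is then differentiable and satisfies `dχ/dx = k χ`. -/
lemma exists_character_of_ae_mul (φ : ℝ → ℂ) (hm : Measurable φ) (hb : ∀ x, ‖φ x‖ ≤ 1)
    (hU : ∀ᵐ x, φ x ≠ 0) (h0 : φ 0 = 1) (hc : ContinuousAt φ 0)
    (hnorm : ∀ x, φ x ≠ 0 → ‖φ x‖ = 1)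
    (hmul : ∀ x y, φ x ≠ 0 → φ y ≠ 0 → φ (x + y) ≠ 0 → φ (x + y) = φ x * φ y) :
    ∃ a : ℝ, ∀ x, φ x ≠ 0 → φ x = Complex.exp (((a * x : ℝ) : ℂ) * Complex.I) := by
  have hint : ∀ a b : ℝ, IntervalIntegrable φ volume a b := fun a b ↦
    intervalIntegrable_const (c := (1 : ℝ)) |>.mono_fun hm.aestronglyMeasurable
      (ae_of_all _ fun x ↦ by simpa using hb x)
  set Φ : ℝ → ℂ := fun x ↦ ∫ t in (0 : ℝ)..x, φ t with hΦ
  have hsub : ∀ a b : ℝ, ∫ t in a..b, φ t = Φ b - Φ a := fun a b ↦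
    (intervalIntegral.integral_interval_sub_left (hint 0 b) (hint 0 a)).symm
  have hΦ0 : Φ 0 = 0 := by simp [hΦ]
  have hΦd0 : HasDerivAt Φ 1 0 := by
    have := intervalIntegral.integral_hasDerivAt_right (hint 0 0)
      hm.stronglyMeasurable.stronglyMeasurableAtFilter hc
    rwa [h0] at this
  obtain ⟨δ, hδc, hδU⟩ : ∃ δ, Φ δ ≠ 0 ∧ φ δ ≠ 0 := by
    have h1 : ∀ᶠ x in 𝓝[≠] (0 : ℝ), Φ x ≠ 0 := hΦd0.eventually_ne one_ne_zero
    have h2 : ∀ᶠ x in 𝓝[≠] (0 : ℝ), φ x ≠ 0 :=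
      (hc.eventually_ne (by simp [h0])).filter_mono nhdsWithin_le_nhds
    exact (h1.and h2).exists
  have hΦc : Continuous Φ := intervalIntegral.continuous_primitive hint 0
  -- Integrating `φ (x + y) = φ x * φ y` over `y ∈ [0, δ]` shows `φ x = χ x` wherever `φ x ≠ 0`.
  set χ : ℝ → ℂ := fun x ↦ (Φ (x + δ) - Φ x) / Φ δ with hχ
  have hχc : Continuous χ := by fun_prop
  have hshift : ∀ x : ℝ, ∀ᵐ y : ℝ, φ (x + y) ≠ 0 := fun x ↦
    (measurePreserving_add_left volume x).quasiMeasurePreserving.ae hU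
  have hφχ : ∀ x, φ x ≠ 0 → φ x = χ x := by
    intro x hx
    rw [hχ, eq_div_iff hδc, ← hsub]
    have h1 : ∫ y in (0 : ℝ)..δ, φ (x + y) = ∫ y in x..(x + δ), φ y := by
      rw [intervalIntegral.integral_comp_add_left, add_zero]
    rw [← h1, hΦ]
    simp only
    rw [← intervalIntegral.integral_const_mul]
    apply intervalIntegral.integral_congr_ae
    filter_upwards [hU, hshift x] with y hy hxy _
    exact (hmul x y hx hy hxy).symm
  have hae : ∀ᵐ x, φ x = χ x := hU.mono hφχ
  have hΦχ : Φ = fun x ↦ ∫ t in (0 : ℝ)..x, χ t := by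
    funext x
    exact intervalIntegral.integral_congr_ae (hae.mono fun t ht _ ↦ ht)
  have hΦd : ∀ x, HasDerivAt Φ (χ x) x := by
    intro x
    rw [hΦχ]
    exact intervalIntegral.integral_hasDerivAt_right (hχc.intervalIntegrable _ _)
      hχc.aestronglyMeasurable.stronglyMeasurableAtFilter hχc.continuousAt
  have hχδ : ∀ x, χ (x + δ) = χ x * φ δ := by
    have : (fun x ↦ χ (x + δ)) = fun x ↦ χ x * φ δ := by
      refine (Continuous.ae_eq_iff_eq volume (by fun_prop) (by fun_prop)).1 ?_
      filter_upwards [hU, hshift δ] with x hx hxδ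
      rw [add_comm] at hxδ
      rw [← hφχ _ hxδ, ← hφχ _ hx, hmul x δ hx hδU hxδ]
    exact congrFun this
  set k : ℂ := (φ δ - 1) / Φ δ with hk
  have hχd : ∀ x, HasDerivAt χ (k * χ x) x := by
    intro x
    have h1 : HasDerivAt (fun y ↦ Φ (y + δ)) (χ (x + δ)) x := (hΦd (x + δ)).comp_add_const x δ
    refine ((h1.sub (hΦd x)).div_const (Φ δ)).congr_deriv ?_
    rw [hχδ, hk]; ring
  have hexp : ∀ x : ℝ, χ x = Complex.exp (k * x) := by
    have hd : ∀ x : ℝ, HasDerivAt (fun x : ℝ ↦ χ x * Complex.exp (-(k * x))) 0 x := by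
      intro x
      have h1 : HasDerivAt (fun x : ℝ ↦ -(k * (x : ℂ))) (-(k * 1)) x :=
        ((Complex.ofRealCLM.hasDerivAt (x := x)).const_mul k).neg
      refine ((hχd x).mul h1.cexp).congr_deriv ?_
      ring
    intro x
    have h2 := is_const_of_deriv_eq_zero (fun x ↦ (hd x).differentiableAt)
      (fun x ↦ (hd x).deriv) x 0
    have h3 : χ 0 = 1 := by rw [← hφχ 0 (by simp [h0]), h0]
    simp only [h3, Complex.ofReal_zero, mul_zero, neg_zero, Complex.exp_zero, mul_one] at h2
    rw [Complex.exp_neg, ← div_eq_mul_inv, div_eq_one_iff_eq (Complex.exp_ne_zero _)] at h2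
    exact h2
  have hre : k.re = 0 := by
    obtain ⟨x, hx, hx0⟩ := (hU.and (Measure.ae_ne volume (0 : ℝ))).exists
    have h1 := hnorm x hx
    rw [hφχ x hx, hexp, Complex.norm_exp, Real.exp_eq_one_iff] at h1
    simpa [hx0] using h1
  refine ⟨k.im, fun x hx ↦ ?_⟩
  rw [hφχ x hx, hexp]
  congr 1
  apply Complex.ext <;> simp [hre]

/-! ### Fourier transform of the 3-deck -/

/-- The Fourier integral of a real function, with kernel `exp (-2π i t ξ)` written
out; it agrees with `𝓕` by `fourier_eq_ft`. -/
noncomputable def ft (f : ℝ → ℝ) (ξ : ℝ) : ℂ :=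
  ∫ t, Complex.exp (((-2 * Real.pi * t * ξ : ℝ) : ℂ) * Complex.I) * (f t : ℂ)

lemma fourier_eq_ft (f : ℝ → ℝ) : 𝓕 (fun t => (f t : ℂ)) = ft f := by
  funext ξ
  rw [Real.fourier_real_eq_integral_exp_smul]
  rfl

lemma ft_continuous {f : ℝ → ℝ} (hf : Integrable f) : Continuous (ft f) := by
  refine continuous_of_dominated (bound := fun t ↦ ‖f t‖) (fun ξ ↦ ?_) (fun ξ ↦ ?_) hf.norm ?_
  · exact (Continuous.aestronglyMeasurable (by fun_prop)).mul
      hf.ofReal.aestronglyMeasurable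
  · exact ae_of_all _ fun t ↦ by rw [norm_mul, Complex.norm_exp_ofReal_mul_I]; simp
  · exact ae_of_all _ fun t ↦ by fun_prop

lemma ft_zero (f : ℝ → ℝ) : ft f 0 = ((∫ t, f t : ℝ) : ℂ) := by
  simp only [ft, mul_zero, Complex.ofReal_zero, zero_mul, Complex.exp_zero, one_mul]
  exact integral_ofReal

lemma ft_neg (f : ℝ → ℝ) (ξ : ℝ) : ft f (-ξ) = (starRingEnd ℂ) (ft f ξ) := by
  rw [ft, ft, ← integral_conj]
  congr 1
  funext t
  rw [map_mul, ← Complex.exp_conj, map_mul, Complex.conj_ofReal, Complex.conj_ofReal,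
    Complex.conj_I]
  congr 2
  push_cast; ring

lemma ft_comp_add (f : ℝ → ℝ) (ξ t : ℝ) :
    ∫ x, Complex.exp (((-2 * Real.pi * x * ξ : ℝ) : ℂ) * Complex.I) * (f (t + x) : ℂ) =
      Complex.exp (((2 * Real.pi * t * ξ : ℝ) : ℂ) * Complex.I) * ft f ξ := by
  rw [ft, ← integral_const_mul,
    ← integral_add_left_eq_self (μ := volume) (fun x ↦
      Complex.exp (((2 * Real.pi * t * ξ : ℝ) : ℂ) * Complex.I) *
        (Complex.exp (((-2 * Real.pi * x * ξ : ℝ) : ℂ) * Complex.I) * (f x : ℂ))) t]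
  congr 1
  funext x
  rw [← mul_assoc, ← Complex.exp_add]
  congr 2
  push_cast; ring

/-- The triple product defining the 3-deck is integrable on `ℝ³`, since
`(t, x, y) ↦ (t, t + x, t + y)` preserves Lebesgue measure. -/
lemma integrable_triple {f : ℝ → ℝ} (hf : Integrable f) :
    Integrable (fun q : ℝ × ℝ × ℝ ↦ f q.1 * (f (q.1 + q.2.1) * f (q.1 + q.2.2)))
      ((volume : Measure ℝ).prod (volume : Measure (ℝ × ℝ))) := by
  have hmp : MeasurePreserving (fun q : ℝ × ℝ × ℝ ↦ (q.1, (q.1, q.1) + q.2))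
      ((volume : Measure ℝ).prod (volume : Measure (ℝ × ℝ)))
      ((volume : Measure ℝ).prod (volume : Measure (ℝ × ℝ))) :=
    (MeasurePreserving.id volume).skew_product (g := fun t p ↦ ((t, t) : ℝ × ℝ) + p)
      (by fun_prop) (ae_of_all _ fun t ↦ (measurePreserving_add_left volume _).map_eq)
  exact hmp.integrable_comp_of_integrable (hf.mul_prod (hf.mul_prod hf))

/-- The Fourier transform of the 3-deck at `(ξ, η)` is `f̂(ξ) f̂(η) f̂(-ξ-η)`. -/
lemma integral_deck {f : ℝ → ℝ} (hf : Integrable f) (ξ η : ℝ) :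
    ∫ p : ℝ × ℝ, (Complex.exp (((-2 * Real.pi * p.1 * ξ : ℝ) : ℂ) * Complex.I) *
        Complex.exp (((-2 * Real.pi * p.2 * η : ℝ) : ℂ) * Complex.I)) *
        ((∫ t : ℝ, f t * f (t + p.1) * f (t + p.2) : ℝ) : ℂ) =
      ft f ξ * ft f η * ft f (-(ξ + η)) := by
  have hI : Integrable (fun q : ℝ × ℝ × ℝ ↦
      (Complex.exp (((-2 * Real.pi * q.2.1 * ξ : ℝ) : ℂ) * Complex.I) *
        Complex.exp (((-2 * Real.pi * q.2.2 * η : ℝ) : ℂ) * Complex.I)) *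
        ((f q.1 * (f (q.1 + q.2.1) * f (q.1 + q.2.2)) : ℝ) : ℂ))
      ((volume : Measure ℝ).prod (volume : Measure (ℝ × ℝ))) := by
    refine (integrable_triple hf).ofReal.bdd_mul (c := 1)
      (Continuous.aestronglyMeasurable (by fun_prop)) (ae_of_all _ fun q ↦ ?_)
    rw [norm_mul, Complex.norm_exp_ofReal_mul_I, Complex.norm_exp_ofReal_mul_I, one_mul]
  calc _ = ∫ p : ℝ × ℝ, ∫ t : ℝ,
        (Complex.exp (((-2 * Real.pi * p.1 * ξ : ℝ) : ℂ) * Complex.I) *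
        Complex.exp (((-2 * Real.pi * p.2 * η : ℝ) : ℂ) * Complex.I)) *
        ((f t * (f (t + p.1) * f (t + p.2)) : ℝ) : ℂ) := by
        congr 1; funext p
        rw [← integral_complex_ofReal, ← integral_const_mul]
        simp only [mul_assoc]
    _ = ∫ t : ℝ, ∫ p : ℝ × ℝ,
        (Complex.exp (((-2 * Real.pi * p.1 * ξ : ℝ) : ℂ) * Complex.I) *
        Complex.exp (((-2 * Real.pi * p.2 * η : ℝ) : ℂ) * Complex.I)) *
        ((f t * (f (t + p.1) * f (t + p.2)) : ℝ) : ℂ) := (integral_integral_swap hI).symm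
    _ = ∫ t : ℝ, (f t : ℂ) *
        ((Complex.exp (((2 * Real.pi * t * ξ : ℝ) : ℂ) * Complex.I) * ft f ξ) *
        (Complex.exp (((2 * Real.pi * t * η : ℝ) : ℂ) * Complex.I) * ft f η)) := by
        congr 1; funext t
        rw [← ft_comp_add, ← ft_comp_add, ← integral_prod_mul, ← integral_const_mul]
        congr 1; funext p
        push_cast; ring
    _ = _ := by
        rw [show ft f (-(ξ + η)) = ∫ t, Complex.exp
          (((-2 * Real.pi * t * (-(ξ + η)) : ℝ) : ℂ) * Complex.I) * (f t : ℂ) from rfl,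
          ← integral_const_mul]
        congr 1; funext t
        have : Complex.exp (((-2 * Real.pi * t * (-(ξ + η)) : ℝ) : ℂ) * Complex.I) =
            Complex.exp (((2 * Real.pi * t * ξ : ℝ) : ℂ) * Complex.I) *
            Complex.exp (((2 * Real.pi * t * η : ℝ) : ℂ) * Complex.I) := by
          rw [← Complex.exp_add]; congr 1; push_cast; ring
        rw [this]; ring

/-! ### Uniqueness and the translate -/

/-- Uniqueness of the Fourier transform for nonnegative integrable functions, deduced from
uniqueness of characteristic functions of finite measures. -/
lemma ae_eq_of_ft_eq {f g : ℝ → ℝ} (hf : Integrable f) (hg : Integrable g)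
    (hf0 : ∀ t, 0 ≤ f t) (hg0 : ∀ t, 0 ≤ g t) (h : ∀ ξ, ft f ξ = ft g ξ) : f =ᵐ[volume] g := by
  have hfin : ∀ {u : ℝ → ℝ}, Integrable u →
      ∫⁻ x, ENNReal.ofReal (u x) ≠ ⊤ := fun {u} hu ↦ hu.lintegral_lt_top.ne
  have hchar : ∀ {u : ℝ → ℝ}, Integrable u → (∀ t, 0 ≤ u t) → ∀ s : ℝ,
      charFun (volume.withDensity fun x ↦ ENNReal.ofReal (u x)) s =
        ft u (-s / (2 * Real.pi)) := by
    intro u hu hu0 s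
    rw [charFun_apply_real, integral_withDensity_eq_integral_toReal_smul₀
      hu.aemeasurable.ennreal_ofReal (ae_of_all _ fun _ ↦ ENNReal.ofReal_lt_top), ft]
    congr 1; funext t
    rw [ENNReal.toReal_ofReal (hu0 t), Complex.real_smul, mul_comm]
    congr 3
    rw [← Complex.ofReal_mul]
    congr 1
    field_simp
  have : IsFiniteMeasure (volume.withDensity fun x ↦ ENNReal.ofReal (f x)) :=
    isFiniteMeasure_withDensity (hfin hf)
  have : IsFiniteMeasure (volume.withDensity fun x ↦ ENNReal.ofReal (g x)) :=
    isFiniteMeasure_withDensity (hfin hg)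
  have hμ := Measure.ext_of_charFun (funext fun s ↦ by rw [hchar hf hf0 s, hchar hg hg0 s, h] :
    charFun (volume.withDensity fun x ↦ ENNReal.ofReal (f x)) =
      charFun (volume.withDensity fun x ↦ ENNReal.ofReal (g x)))
  rw [withDensity_eq_iff hf.aemeasurable.ennreal_ofReal hg.aemeasurable.ennreal_ofReal
    (hfin hf)] at hμ
  filter_upwards [hμ] with x hx
  exact (ENNReal.ofReal_eq_ofReal_iff (hf0 x) (hg0 x)).1 hx

/-- if `f, g ∈ L¹(ℝ)` are nonnegative with the same 3-deck, and the
zero set of `f̂` is Lebesgue-null, then `g` is a translate of `f`. -/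
theorem same_3deck_nonvanishing_fourier_implies_translate (f g : ℝ → ℝ)
    (hf : Integrable f) (hg : Integrable g)
    (hf0 : ∀ t, 0 ≤ f t) (hg0 : ∀ t, 0 ≤ g t)
    (hN : ∀ᵐ p : ℝ × ℝ,
      (∫ t : ℝ, f t * f (t + p.1) * f (t + p.2)) =
      (∫ t : ℝ, g t * g (t + p.1) * g (t + p.2)))
    (hzero : volume {ξ : ℝ | 𝓕 (fun t => (f t : ℂ)) ξ = 0} = 0) :
    ∃ a : ℝ, ∀ᵐ x : ℝ, g x = f (x - a) := by
  rw [fourier_eq_ft] at hzero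
  have hU : ∀ᵐ ξ, ft f ξ ≠ 0 := by simpa [ae_iff] using hzero
  have hdeck : ∀ ξ η, ft f ξ * ft f η * ft f (-(ξ + η)) =
      ft g ξ * ft g η * ft g (-(ξ + η)) := by
    intro ξ η
    rw [← integral_deck hf, ← integral_deck hg]
    apply integral_congr_ae
    filter_upwards [hN] with p hp
    rw [hp]
  have hm : ∫ t, f t ≠ 0 := by
    intro h
    rw [integral_eq_zero_iff_of_nonneg hf0 hf] at h
    obtain ⟨ξ, hξ⟩ := hU.exists
    apply hξ
    rw [ft]
    refine integral_eq_zero_of_ae ?_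
    filter_upwards [h] with t ht
    simp [ht]
  have h00 : ft f 0 ≠ 0 := by rw [ft_zero]; exact_mod_cast hm
  have h0 : ft g 0 = ft f 0 := by
    have h1 := hdeck 0 0
    rw [add_zero, neg_zero, ft_zero, ft_zero] at h1
    rw [ft_zero, ft_zero]
    norm_cast at h1 ⊢
    have h2 : (∫ t, f t) ^ 3 = (∫ t, g t) ^ 3 := by linear_combination h1
    exact ((Odd.strictMono_pow (by decide : Odd 3)).injective h2).symm
  have hnorm : ∀ ξ, ‖ft g ξ‖ = ‖ft f ξ‖ := by
    intro ξ
    have h1 := hdeck ξ (-ξ)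
    rw [add_neg_cancel, neg_zero, h0, ft_neg, ft_neg, Complex.mul_conj, Complex.mul_conj] at h1
    have h2 := mul_right_cancel₀ h00 h1
    rw [Complex.ofReal_inj, Complex.normSq_eq_norm_sq, Complex.normSq_eq_norm_sq] at h2
    exact ((sq_eq_sq₀ (norm_nonneg _) (norm_nonneg _)).1 h2).symm
  have hgz : ∀ ξ, ft g ξ = 0 ↔ ft f ξ = 0 := fun ξ ↦ by
    rw [← norm_eq_zero, hnorm, norm_eq_zero]
  have hne : ∀ ξ, ft g ξ / ft f ξ ≠ 0 ↔ ft f ξ ≠ 0 := fun ξ ↦ by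
    rw [Ne, div_eq_zero_iff, hgz, or_self]
  have hn1 : ∀ ξ, ft f ξ ≠ 0 → ‖ft g ξ / ft f ξ‖ = 1 := fun ξ h ↦ by
    rw [norm_div, hnorm, div_self (norm_ne_zero_iff.2 h)]
  obtain ⟨b, hb⟩ := exists_character_of_ae_mul (fun ξ ↦ ft g ξ / ft f ξ)
    ((ft_continuous hg).measurable.div (ft_continuous hf).measurable)
    (fun ξ ↦ by rw [norm_div, hnorm]; exact div_self_le_one _)
    (hU.mono fun ξ h ↦ (hne ξ).2 h)
    (by simp only [h0, div_self h00])
    ((ft_continuous hg).continuousAt.div (ft_continuous hf).continuousAt h00)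
    (fun ξ h ↦ hn1 ξ ((hne ξ).1 h))
    (by
      intro x y hx hy hxy
      rw [hne] at hx hy hxy
      have h1 := hdeck x y
      rw [ft_neg, ft_neg] at h1
      have h2 : ft f (x + y) * (starRingEnd ℂ) (ft f (x + y)) =
          ft g (x + y) * (starRingEnd ℂ) (ft g (x + y)) := by
        rw [Complex.mul_conj, Complex.mul_conj, Complex.normSq_eq_norm_sq,
          Complex.normSq_eq_norm_sq, hnorm]
      have h3 : (starRingEnd ℂ) (ft g (x + y)) ≠ 0 := by
        rw [Ne, map_eq_zero, hgz]; exact hxy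
      rw [div_mul_div_comm, div_eq_div_iff hxy (mul_ne_zero hx hy)]
      apply mul_right_cancel₀ h3
      linear_combination ft f (x + y) * h1 - ft f x * ft f y * h2)
  have hgf : ∀ ξ, ft g ξ = Complex.exp (((b * ξ : ℝ) : ℂ) * Complex.I) * ft f ξ := by
    intro ξ
    by_cases h : ft f ξ = 0
    · rw [h, mul_zero, hgz, h]
    · rw [← hb ξ ((hne ξ).2 h), div_mul_cancel₀ _ h]
  -- A phase `exp (i b ξ)` corresponds to translation by `-b / (2π)`.
  refine ⟨-(b / (2 * Real.pi)), ?_⟩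
  refine ae_eq_of_ft_eq hg (hf.comp_sub_right _) hg0 (fun t ↦ hf0 _) fun ξ ↦ ?_
  have h1 := ft_comp_add f ξ (b / (2 * Real.pi))
  have h2 : 2 * Real.pi * (b / (2 * Real.pi)) * ξ = b * ξ := by field_simp
  rw [h2, ← hgf] at h1
  rw [← h1, ft]
  simp only [sub_neg_eq_add, add_comm]
end

section
/- If f ∈ L¹(ℝ) is nonnegative, compactly supported, and g ∈ L¹(ℝ) is nonnegative with the same 3-deck as f, then there exists a ∈ ℝ such that g(x) = f(x−a) for almost every x ∈ ℝ. -/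
/-!
Let `μ` and `ν` be the measures with densities `f` and `g`. By Tonelli, the 3-deck of `f` is the density
of the law `deckMeasure μ` of `(s - t, r - t)` under `μ ⊗ μ ⊗ μ`
(`lintegral_deckMeasure_withDensity`), so the hypothesis says `deckMeasure μ = deckMeasure ν`.

Comparing total masses gives `μ ℝ = ν ℝ`. Since differences of points in the support of `μ` are bounded,
so are those for `ν`, hence `ν` has bounded support as well (`ae_bounded_of_deckMeasure_eq`) and all
moments exist. Write `c n` for the moments of `μ` about its mean, so that `c 1 = 0`. Expanding
`(s - t) ^ n * (r - t)` for `n ≥ 1` and integrating gives `± (c 0) ^ 2 * c (n + 1)` plus a polynomial in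
`c 0, …, c n`; recursively, the deck measure determines every centred moment (`centredMoments_eq`).
Compactly supported measures with equal moments coincide by Weierstrass approximation
(`measure_eq_of_moments_eq`), so the centred translates of `μ` and `ν` are equal, and comparing densities
gives the result.
-/

open MeasureTheory

/-- The image of `μ ⊗ μ ⊗ μ` under `(t, s, r) ↦ (s - t, r - t)`. When `μ` has density `u`, this is the
measure on `ℝ²` whose density is the 3-deck of `u`. -/
noncomputable def deckMeasure (μ : Measure ℝ) : Measure (ℝ × ℝ) :=
  (μ.prod (μ.prod μ)).map (fun q : ℝ × ℝ × ℝ => (q.2.1 - q.1, q.2.2 - q.1))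

lemma measurable_deckMap :
    Measurable (fun q : ℝ × ℝ × ℝ => (q.2.1 - q.1, q.2.2 - q.1)) := by
  fun_prop

lemma lintegral_deckMeasure_withDensity {u : ℝ → ENNReal} (hu : Measurable u)
    (hfin : ∫⁻ t, u t ≠ ⊤) {ψ : ℝ × ℝ → ENNReal} (hψ : Measurable ψ) :
    ∫⁻ p, ψ p ∂(deckMeasure (volume.withDensity u)) =
      ∫⁻ p, ψ p * ∫⁻ t, u t * u (t + p.1) * u (t + p.2) := by
  have : IsFiniteMeasure (volume.withDensity u) := isFiniteMeasure_withDensity hfin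
  have hm : Measurable fun q : ℝ × ℝ × ℝ => u q.1 * (u q.2.1 * u q.2.2) := by fun_prop
  rw [deckMeasure, lintegral_map hψ measurable_deckMap, prod_withDensity hu hu,
    prod_withDensity hu (by fun_prop),
    lintegral_withDensity_eq_lintegral_mul _ hm 
      (g := fun q : ℝ × ℝ × ℝ => ψ (q.2.1 - q.1, q.2.2 - q.1)) (by fun_prop),
    lintegral_prod _ (by fun_prop)]
  have h1 : ∀ t : ℝ, (∫⁻ p : ℝ × ℝ, ((fun q : ℝ × ℝ × ℝ => u q.1 * (u q.2.1 * u q.2.2)) *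
      (fun q : ℝ × ℝ × ℝ => ψ (q.2.1 - q.1, q.2.2 - q.1))) (t, p) ∂(volume.prod volume)) =
      ∫⁻ p : ℝ × ℝ, ψ p * (u t * u (t + p.1) * u (t + p.2)) := by
    intro t
    rw [← Measure.volume_eq_prod, ← lintegral_add_right_eq_self _ ((t, t) : ℝ × ℝ)]
    refine lintegral_congr fun p => ?_
    simp only [Pi.mul_apply, Prod.fst_add, Prod.snd_add, add_sub_cancel_right]
    rw [add_comm t p.1, add_comm t p.2]
    ring
  rw [lintegral_congr h1, lintegral_lintegral_swap (by fun_prop)]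
  refine lintegral_congr fun p => ?_
  rw [lintegral_const_mul _ (by fun_prop)]

lemma lintegral_tripleCorrelation_lt_top {u : ℝ → ENNReal} (hu : Measurable u)
    (hfin : ∫⁻ t, u t ≠ ⊤) :
    ∀ᵐ p : ℝ × ℝ, ∫⁻ t, u t * u (t + p.1) * u (t + p.2) < ⊤ := by
  have : IsFiniteMeasure (volume.withDensity u) := isFiniteMeasure_withDensity hfin
  have h := lintegral_deckMeasure_withDensity hu hfin (ψ := fun _ => 1) measurable_const
  have : IsFiniteMeasure (deckMeasure (volume.withDensity u)) := by
    unfold deckMeasure; infer_instance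
  simp only [one_mul, lintegral_one] at h
  refine ae_lt_top ?_ (h ▸ measure_ne_top _ _)
  refine Measurable.lintegral_prod_right' (f := fun z : (ℝ × ℝ) × ℝ =>
    u z.2 * u (z.2 + z.1.1) * u (z.2 + z.1.2)) ?_
  fun_prop

/-- The Bochner 3-deck of a nonnegative function, computed from a measurable representative `f'`. The
exceptional null set is translated along with `p`, so the identity holds for every `p`. -/
lemma integral_deck_eq_toReal {f f' : ℝ → ℝ} (hf : AEStronglyMeasurable f) (hf0 : ∀ t, 0 ≤ f t)
    (hff' : f =ᵐ[volume] f') (p : ℝ × ℝ) :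
    ∫ t : ℝ, f t * f (t + p.1) * f (t + p.2) =
      (∫⁻ t, ENNReal.ofReal (f' t) * ENNReal.ofReal (f' (t + p.1)) *
        ENNReal.ofReal (f' (t + p.2))).toReal := by
  have hq : ∀ a : ℝ, Measure.QuasiMeasurePreserving (fun t : ℝ => t + a) volume volume :=
    fun a => (measurePreserving_add_right volume a).quasiMeasurePreserving
  rw [integral_eq_lintegral_of_nonneg_ae]
  · congr 1
    refine lintegral_congr_ae ?_
    filter_upwards [hff', (hq p.1).ae_eq_comp hff', (hq p.2).ae_eq_comp hff'] with t h0 h1 h2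
    simp only [Function.comp_apply] at h1 h2
    rw [← h0, ← h1, ← h2, ENNReal.ofReal_mul (mul_nonneg (hf0 _) (hf0 _)),
      ENNReal.ofReal_mul (hf0 _)]
  · exact Filter.Eventually.of_forall fun t => mul_nonneg (mul_nonneg (hf0 _) (hf0 _)) (hf0 _)
  · exact (hf.mul (hf.comp_quasiMeasurePreserving (hq p.1))).mul
      (hf.comp_quasiMeasurePreserving (hq p.2))

lemma deckMeasure_univ (μ : Measure ℝ) [IsFiniteMeasure μ] :
    deckMeasure μ Set.univ = μ Set.univ ^ 3 := by
  rw [deckMeasure, Measure.map_apply measurable_deckMap MeasurableSet.univ, Set.preimage_univ,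
    ← Set.univ_prod_univ, Measure.prod_prod, ← Set.univ_prod_univ, Measure.prod_prod]
  ring

lemma measure_univ_eq_of_deckMeasure_eq {μ ν : Measure ℝ} [IsFiniteMeasure μ] [IsFiniteMeasure ν]
    (h : deckMeasure μ = deckMeasure ν) : μ Set.univ = ν Set.univ := by
  have h3 : μ Set.univ ^ 3 = ν Set.univ ^ 3 := by rw [← deckMeasure_univ, h, deckMeasure_univ]
  exact (ENNReal.pow_right_strictMono three_ne_zero).injective h3

/-- Bounded support is visible in the 3-deck: if `μ`-almost all pairs are at distance at most `2K`,
then so are `ν`-almost all pairs, and a single generic base point locates the support of `ν`. -/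
lemma ae_bounded_of_deckMeasure_eq {μ ν : Measure ℝ} [IsFiniteMeasure μ] [IsFiniteMeasure ν]
    (h : deckMeasure μ = deckMeasure ν) (hμ : ∃ K, ∀ᵐ x ∂μ, |x| ≤ K) (hν : ν ≠ 0) :
    ∃ K, ∀ᵐ x ∂ν, |x| ≤ K := by
  obtain ⟨K, hK⟩ := hμ
  have hS : MeasurableSet {p : ℝ × ℝ | |p.1| ≤ 2 * K} :=
    measurableSet_le (by fun_prop) (by fun_prop)
  have h1 : ∀ᵐ p ∂(deckMeasure μ), |p.1| ≤ 2 * K := by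
    rw [deckMeasure, ae_map_iff measurable_deckMap.aemeasurable hS]
    have ha : ∀ᵐ q ∂(μ.prod (μ.prod μ)), |q.1| ≤ K :=
      Measure.quasiMeasurePreserving_fst.ae hK
    have hb : ∀ᵐ q ∂(μ.prod (μ.prod μ)), |q.2.1| ≤ K :=
      Measure.quasiMeasurePreserving_snd.ae (Measure.quasiMeasurePreserving_fst.ae hK)
    filter_upwards [ha, hb] with q h1 h2
    rw [abs_le] at *
    constructor <;> linarith [h1.1, h1.2, h2.1, h2.2]
  rw [h, deckMeasure, ae_map_iff measurable_deckMap.aemeasurable hS] at h1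
  have : (ae ν).NeBot := ae_neBot.2 hν
  obtain ⟨t, ht⟩ := (Measure.ae_ae_of_ae_prod h1).exists
  refine ⟨2 * K + |t|, ?_⟩
  filter_upwards [Measure.ae_ae_of_ae_prod ht] with s hs
  obtain ⟨r, hr⟩ := hs.exists
  calc |s| = |(s - t) + t| := by ring_nf
    _ ≤ |s - t| + |t| := abs_add_le _ _
    _ ≤ 2 * K + |t| := by gcongr

lemma integrable_sub_pow {μ : Measure ℝ} [IsFiniteMeasure μ] (hμ : ∃ K, ∀ᵐ x ∂μ, |x| ≤ K)
    (m : ℝ) (n : ℕ) : Integrable (fun x => (x - m) ^ n) μ := by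
  obtain ⟨K, hK⟩ := hμ
  refine Integrable.of_bound (by fun_prop) ((K + |m|) ^ n) ?_
  filter_upwards [hK] with x hx
  rw [norm_pow, Real.norm_eq_abs]
  gcongr
  exact (abs_sub _ _).trans (by gcongr)

lemma integral_deckMeasure_monomial {μ : Measure ℝ} [IsFiniteMeasure μ]
    (hμ : ∃ K, ∀ᵐ x ∂μ, |x| ≤ K) (m : ℝ) (n : ℕ) :
    ∫ p, p.1 ^ n * p.2 ∂(deckMeasure μ) =
      ∑ k ∈ Finset.range (n + 1), (n.choose k * (-1) ^ (n - k) : ℝ) *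
        ((∫ x, (x - m) ^ (n - k) ∂μ) * ((∫ x, (x - m) ^ k ∂μ) * (∫ x, (x - m) ^ 1 ∂μ)) -
          (∫ x, (x - m) ^ (n - k + 1) ∂μ) *
            ((∫ x, (x - m) ^ k ∂μ) * (∫ x, (x - m) ^ 0 ∂μ))) := by
  have hI : ∀ i j l : ℕ, Integrable
      (fun q : ℝ × ℝ × ℝ => (q.1 - m) ^ i * ((q.2.1 - m) ^ j * (q.2.2 - m) ^ l))
      (μ.prod (μ.prod μ)) := fun i j l =>
    (integrable_sub_pow hμ m i).mul_prod
      ((integrable_sub_pow hμ m j).mul_prod (integrable_sub_pow hμ m l))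
  have hE : ∀ i j l : ℕ,
      ∫ q : ℝ × ℝ × ℝ, (q.1 - m) ^ i * ((q.2.1 - m) ^ j * (q.2.2 - m) ^ l) ∂(μ.prod (μ.prod μ)) =
      (∫ x, (x - m) ^ i ∂μ) * ((∫ x, (x - m) ^ j ∂μ) * (∫ x, (x - m) ^ l ∂μ)) := by
    intro i j l
    rw [← integral_prod_mul (fun x => (x - m) ^ j) (fun x => (x - m) ^ l),
      ← integral_prod_mul (fun x => (x - m) ^ i)
        (fun z : ℝ × ℝ => (z.1 - m) ^ j * (z.2 - m) ^ l)]
  rw [deckMeasure, integral_map measurable_deckMap.aemeasurable (by fun_prop)]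
  have hexp : ∀ q : ℝ × ℝ × ℝ, (q.2.1 - q.1) ^ n * (q.2.2 - q.1) =
      ∑ k ∈ Finset.range (n + 1), (n.choose k * (-1) ^ (n - k) : ℝ) *
        ((q.1 - m) ^ (n - k) * ((q.2.1 - m) ^ k * (q.2.2 - m) ^ 1) -
          (q.1 - m) ^ (n - k + 1) * ((q.2.1 - m) ^ k * (q.2.2 - m) ^ 0)) := by
    intro q
    have e : q.2.1 - q.1 = (q.2.1 - m) + (-1) * (q.1 - m) := by ring
    rw [e, add_pow, Finset.sum_mul]
    refine Finset.sum_congr rfl fun k _ => ?_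
    rw [mul_pow]
    ring
  simp only [hexp]
  have hD : ∀ i j l i' j' l' : ℕ, Integrable (fun q : ℝ × ℝ × ℝ =>
      (q.1 - m) ^ i * ((q.2.1 - m) ^ j * (q.2.2 - m) ^ l) -
        (q.1 - m) ^ i' * ((q.2.1 - m) ^ j' * (q.2.2 - m) ^ l')) (μ.prod (μ.prod μ)) :=
    fun i j l i' j' l' => (hI i j l).sub (hI i' j' l')
  rw [integral_finsetSum _ fun k _ => (hD _ _ _ _ _ _).const_mul _]
  refine Finset.sum_congr rfl fun k _ => ?_
  rw [integral_const_mul, integral_sub (hI _ _ _) (hI _ _ _), hE, hE]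

/-- Moments centred at the respective means agree. With centred moments `c` and `c 1 = 0`, for `n ≥ 1` the
integral of `x ^ n * y` against the deck measure is `± (c 0) ^ 2 * c (n + 1)` plus a polynomial in
`c 0, …, c n`, so `c (n + 1)` is determined recursively. -/
lemma centredMoments_eq {μ ν : Measure ℝ} [IsFiniteMeasure μ] [IsFiniteMeasure ν]
    (h : deckMeasure μ = deckMeasure ν) (hμ : ∃ K, ∀ᵐ x ∂μ, |x| ≤ K)
    (hν : ∃ K, ∀ᵐ x ∂ν, |x| ≤ K) (hν0 : ν ≠ 0) {a b : ℝ}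
    (ha : ∫ x, (x - a) ^ 1 ∂μ = 0) (hb : ∫ x, (x - b) ^ 1 ∂ν = 0) (n : ℕ) :
    ∫ x, (x - a) ^ n ∂μ = ∫ x, (x - b) ^ n ∂ν := by
  have h0 : ∫ x, (x - a) ^ 0 ∂μ = ∫ x, (x - b) ^ 0 ∂ν := by
    simp [Measure.real, measure_univ_eq_of_deckMeasure_eq h]
  have hne : ∫ x, (x - b) ^ 0 ∂ν ≠ 0 := by
    simp [Measure.real, ENNReal.toReal_eq_zero_iff, hν0]
  induction n using Nat.strong_induction_on with
  | _ n ih =>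
    match n with
    | 0 => exact h0
    | 1 => rw [ha, hb]
    | n + 2 =>
      have hd : ∫ p, p.1 ^ (n + 1) * p.2 ∂(deckMeasure μ) =
        ∫ p, p.1 ^ (n + 1) * p.2 ∂(deckMeasure ν) := by rw [h]
      rw [integral_deckMeasure_monomial hμ a, integral_deckMeasure_monomial hν b, ha, hb,
        Finset.sum_range_succ', Finset.sum_range_succ' _ (n + 1), h0] at hd
      have hsum : ∀ k ∈ Finset.range (n + 1),
          ∫ x, (x - a) ^ (n + 1 - (k + 1)) ∂μ = ∫ x, (x - b) ^ (n + 1 - (k + 1)) ∂ν ∧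
          ∫ x, (x - a) ^ (k + 1) ∂μ = ∫ x, (x - b) ^ (k + 1) ∂ν ∧
          ∫ x, (x - a) ^ (n + 1 - (k + 1) + 1) ∂μ = ∫ x, (x - b) ^ (n + 1 - (k + 1) + 1) ∂ν := by
        intro k hk
        have := Finset.mem_range.1 hk
        exact ⟨ih _ (by omega), ih _ (by omega), ih _ (by omega)⟩
      rw [Finset.sum_congr rfl fun k hk => by
        rw [(hsum k hk).1, (hsum k hk).2.1, (hsum k hk).2.2]] at hd
      have hd' := add_left_cancel hd
      simp only [Nat.choose_zero_right, Nat.cast_one, one_mul, Nat.sub_zero, mul_zero, zero_sub,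
        mul_neg, neg_inj] at hd'
      have hs : ((-1 : ℝ)) ^ (n + 1) ≠ 0 := pow_ne_zero _ (by norm_num)
      exact mul_right_cancel₀ (mul_ne_zero hne hne) (mul_left_cancel₀ hs hd')

/-- Determinacy of the moment problem for compactly supported measures, by Weierstrass
approximation. -/
lemma measure_eq_of_moments_eq {μ ν : Measure ℝ} [IsFiniteMeasure μ] [IsFiniteMeasure ν]
    (hμ : ∃ K, ∀ᵐ x ∂μ, |x| ≤ K) (hν : ∃ K, ∀ᵐ x ∂ν, |x| ≤ K)
    (h : ∀ n : ℕ, ∫ x, x ^ n ∂μ = ∫ x, x ^ n ∂ν) : μ = ν := by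
  obtain ⟨K, hK⟩ := hμ
  obtain ⟨L, hL⟩ := hν
  have hpi : ∀ {ρ : Measure ℝ} [IsFiniteMeasure ρ], (∃ K, ∀ᵐ x ∂ρ, |x| ≤ K) →
      ∀ n : ℕ, Integrable (fun x => x ^ n) ρ := fun hρ n => by
    simpa using integrable_sub_pow hρ 0 n
  have hpoly : ∀ {ρ : Measure ℝ} [IsFiniteMeasure ρ], (∃ K, ∀ᵐ x ∂ρ, |x| ≤ K) →
      ∀ p : Polynomial ℝ, Integrable (fun x => p.eval x) ρ ∧
        ∫ x, p.eval x ∂ρ = ∑ i ∈ Finset.range (p.natDegree + 1), p.coeff i * ∫ x, x ^ i ∂ρ := by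
    intro ρ _ hρ p
    simp only [Polynomial.eval_eq_sum_range]
    refine ⟨integrable_finsetSum _ fun i _ => (hpi hρ i).const_mul _, ?_⟩
    rw [integral_finsetSum _ fun i _ => (hpi hρ i).const_mul _]
    simp only [integral_const_mul]
  refine ext_of_forall_integral_eq_of_IsFiniteMeasure fun φ => ?_
  have key : ∀ {ρ : Measure ℝ} [IsFiniteMeasure ρ] (p : Polynomial ℝ) (ε : ℝ),
      (∃ K, ∀ᵐ x ∂ρ, |x| ≤ K) → (∀ᵐ x ∂ρ, |p.eval x - φ x| < ε) →
      |∫ x, p.eval x ∂ρ - ∫ x, φ x ∂ρ| ≤ ε * ρ.real Set.univ := by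
    intro ρ _ p ε hρ hp
    rw [← integral_sub (hpoly hρ p).1 (φ.integrable ρ)]
    exact norm_integral_le_of_norm_le_const (f := fun x => p.eval x - φ x)
      (hp.mono fun x hx => hx.le)
  refine eq_of_forall_dist_le fun ε hε => ?_
  set T := μ.real Set.univ + ν.real Set.univ + 1
  have hT : 0 < T := by positivity
  obtain ⟨p, hp⟩ := exists_polynomial_near_of_continuousOn (-(max K L)) (max K L) φ
    φ.continuous.continuousOn (ε / T) (by positivity)
  have k1 := key (ρ := μ) p (ε / T) ⟨K, hK⟩
    (hK.mono fun x hx => hp x (abs_le.1 (hx.trans (le_max_left _ _))))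
  have k2 := key (ρ := ν) p (ε / T) ⟨L, hL⟩
    (hL.mono fun x hx => hp x (abs_le.1 (hx.trans (le_max_right _ _))))
  have k3 : ∫ x, p.eval x ∂μ = ∫ x, p.eval x ∂ν := by
    rw [(hpoly ⟨K, hK⟩ p).2, (hpoly ⟨L, hL⟩ p).2]
    simp only [h]
  have k4 : ε / T * μ.real Set.univ + ε / T * ν.real Set.univ ≤ ε := by
    rw [← mul_add, div_mul_eq_mul_div, div_le_iff₀ hT]
    gcongr
    simp [T]
  rw [Real.dist_eq]
  rw [k3] at k1
  rw [abs_le] at *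
  constructor <;> linarith [k1.1, k1.2, k2.1, k2.2]

lemma exists_integral_sub_eq_zero {μ : Measure ℝ} [IsFiniteMeasure μ]
    (hμ : ∃ K, ∀ᵐ x ∂μ, |x| ≤ K) (h0 : μ ≠ 0) : ∃ a : ℝ, ∫ x, (x - a) ^ 1 ∂μ = 0 := by
  have hne : μ.real Set.univ ≠ 0 := by simp [Measure.real, ENNReal.toReal_eq_zero_iff, h0]
  refine ⟨(∫ x, x ∂μ) / μ.real Set.univ, ?_⟩
  have hi : Integrable (fun x : ℝ => x) μ := by simpa using integrable_sub_pow hμ 0 1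
  simp only [pow_one]
  rw [integral_sub hi (integrable_const _), integral_const, smul_eq_mul, mul_div_cancel₀ _ hne,
    sub_self]

/-- A compactly supported finite measure is determined by its deck measure up to translation. -/
lemma exists_map_eq_of_deckMeasure_eq {μ ν : Measure ℝ} [IsFiniteMeasure μ] [IsFiniteMeasure ν]
    (h : deckMeasure μ = deckMeasure ν) (hμ : ∃ K, ∀ᵐ x ∂μ, |x| ≤ K) :
    ∃ a : ℝ, ν = μ.map (fun x => x + a) := by
  have huniv := measure_univ_eq_of_deckMeasure_eq h
  by_cases hν0 : ν = 0
  · have : μ = 0 := by simpa [hν0] using huniv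
    exact ⟨0, by simp [hν0, this]⟩
  have hμ0 : μ ≠ 0 := by
    rintro rfl
    exact hν0 (by simpa using huniv.symm)
  have hν := ae_bounded_of_deckMeasure_eq h hμ hν0
  obtain ⟨a, ha⟩ := exists_integral_sub_eq_zero hμ hμ0
  obtain ⟨b, hb⟩ := exists_integral_sub_eq_zero hν hν0
  have hms : ∀ c : ℝ, Measurable fun x : ℝ => x - c := fun c => by fun_prop
  have hbd : ∀ {ρ : Measure ℝ} (c : ℝ), (∃ K, ∀ᵐ x ∂ρ, |x| ≤ K) →
      ∃ K, ∀ᵐ x ∂(ρ.map fun x => x - c), |x| ≤ K := by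
    rintro ρ c ⟨K, hK⟩
    refine ⟨K + |c|, ?_⟩
    rw [ae_map_iff (hms c).aemeasurable (measurableSet_le (by fun_prop) (by fun_prop))]
    filter_upwards [hK] with x hx
    exact (abs_sub _ _).trans (by gcongr)
  have hmap : μ.map (fun x => x - a) = ν.map (fun x => x - b) := by
    refine measure_eq_of_moments_eq (hbd a hμ) (hbd b hν) fun n => ?_
    rw [integral_map (hms a).aemeasurable (by fun_prop),
      integral_map (hms b).aemeasurable (by fun_prop)]
    exact centredMoments_eq h hμ hν hν0 ha hb n
  refine ⟨b - a, ?_⟩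
  have h2 := congrArg (fun ρ : Measure ℝ => ρ.map fun x => x + b) hmap
  rw [Measure.map_map (by fun_prop) (hms a), Measure.map_map (by fun_prop) (hms b)] at h2
  have e1 : ((fun x : ℝ => x + b) ∘ fun x => x - b) = id := by ext x; simp
  have e2 : ((fun x : ℝ => x + b) ∘ fun x => x - a) = fun x => x + (b - a) := by
    ext x; simp only [Function.comp_apply]; ring
  rw [e1, e2, Measure.map_id] at h2
  exact h2.symm

lemma map_add_withDensity (u : ℝ → ENNReal) (a : ℝ) :
    (volume.withDensity u).map (fun x => x + a) = volume.withDensity fun x => u (x - a) := by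
  ext s hs
  have hm : Measurable fun x : ℝ => x + a := by fun_prop
  rw [Measure.map_apply hm hs, withDensity_apply _ (hm hs), withDensity_apply _ hs,
    ← lintegral_indicator (hm hs), ← lintegral_indicator hs,
    ← lintegral_add_right_eq_self (s.indicator _) a]
  refine lintegral_congr fun x => ?_
  simp [Set.indicator, Set.mem_preimage]
  rfl

/-- a nonnegative compactly supported integrable function on `ℝ` is
determined up to translation by its 3-deck. -/
theorem compactSupport_determined_by_3deck (f g : ℝ → ℝ)
    (hf : Integrable f) (hfc : HasCompactSupport f) (hg : Integrable g)
    (hf0 : ∀ t, 0 ≤ f t) (hg0 : ∀ t, 0 ≤ g t)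
    (hN : ∀ᵐ p : ℝ × ℝ,
      (∫ t : ℝ, f t * f (t + p.1) * f (t + p.2)) =
      (∫ t : ℝ, g t * g (t + p.1) * g (t + p.2))) :
    ∃ a : ℝ, ∀ᵐ x : ℝ, g x = f (x - a) := by
  obtain ⟨f', hf'm, hff'⟩ := hf.1.aemeasurable
  obtain ⟨g', hg'm, hgg'⟩ := hg.1.aemeasurable
  set u : ℝ → ENNReal := fun t => ENNReal.ofReal (f' t) with hu_def
  set v : ℝ → ENNReal := fun t => ENNReal.ofReal (g' t) with hv_def
  have hu : Measurable u := by fun_prop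
  have hv : Measurable v := by fun_prop
  have hufin : ∫⁻ t, u t ≠ ⊤ := (hf.congr hff').lintegral_lt_top.ne
  have hvfin : ∫⁻ t, v t ≠ ⊤ := (hg.congr hgg').lintegral_lt_top.ne
  have : IsFiniteMeasure (volume.withDensity u) := isFiniteMeasure_withDensity hufin
  have : IsFiniteMeasure (volume.withDensity v) := isFiniteMeasure_withDensity hvfin
  have hdeck : deckMeasure (volume.withDensity u) = deckMeasure (volume.withDensity v) := by
    refine Measure.ext_of_lintegral _ fun ψ hψ => ?_
    rw [lintegral_deckMeasure_withDensity hu hufin hψ, lintegral_deckMeasure_withDensity hv hvfin hψ]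
    refine lintegral_congr_ae ?_
    filter_upwards [hN, lintegral_tripleCorrelation_lt_top hu hufin,
      lintegral_tripleCorrelation_lt_top hv hvfin] with p hp h1 h2
    rw [integral_deck_eq_toReal hf.1 hf0 hff', integral_deck_eq_toReal hg.1 hg0 hgg',
      ENNReal.toReal_eq_toReal_iff' h1.ne h2.ne] at hp
    rw [hp]
  have hbdd : ∃ K, ∀ᵐ x ∂(volume.withDensity u), |x| ≤ K := by
    obtain ⟨K, hK⟩ := hfc.isCompact.isBounded.exists_norm_le
    refine ⟨K, (ae_withDensity_iff hu).2 ?_⟩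
    filter_upwards [hff'] with x hx hux
    refine hK x (subset_tsupport f ?_)
    intro h0
    exact hux (by simp [hu_def, ← hx, h0])
  obtain ⟨a, ha⟩ := exists_map_eq_of_deckMeasure_eq hdeck hbdd
  rw [map_add_withDensity u, withDensity_eq_iff hv.aemeasurable (by fun_prop) hvfin] at ha
  refine ⟨a, ?_⟩
  have hq := (measurePreserving_sub_right volume a).quasiMeasurePreserving.ae_eq_comp hff'
  filter_upwards [ha, hgg', hq] with x h1 h2 h3
  simp only [Function.comp_apply] at h3
  simp only [hu_def, hv_def, ← h2, ← h3] at h1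
  exact (ENNReal.ofReal_eq_ofReal_iff (hg0 _) (hf0 _)).1 h1
end

section
/- If f ∈ L¹(ℝ) is nonnegative and there exists M > 0 with ∫ |f(x)| e^{M|x|} dx < ∞, then f is determined up to translations by its 3-deck: any nonnegative g ∈ L¹(ℝ) with N_g = N_f a.e. satisfies g(x) = f(x−a) a.e. for some a ∈ ℝ. -/
/-!
The proof replaces the Fourier transform by the two-sided Laplace transform
`L φ s = ∫⁻ φ(x) e^{s x} dx`, an extended nonnegative number for every real `s`. By Tonelli, the
Laplace transform of the 3-deck factors (`lintegral_deck`):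
`∫∫ N_φ(x, y) e^{s x + r y} dx dy = L φ s * L φ r * L φ (-s - r)`.

Equal 3-decks therefore give equal triple products. Taking `r = 0`, the product
`L g s * L g 0 * L g (-s)` is finite for `|s| ≤ M` and all its factors are positive, so each of them
is finite: `g` inherits the exponential moment from `f`. On the open interval `(-M, M)` both
transforms are then positive and analytic, and `k = log L g - log L f` satisfies
`k s + k r + k (-s - r) = 0`, which makes it linear, `k s = a * s` (`linear_of_triple_sum_eq_zero`).
Hence `L g s = e^{a s} L f s` near `0`, which says that `g` and the translate of `f` by `a` have the
same Laplace transform on an interval. By analytic continuation to the imaginary axis and the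
injectivity of the characteristic function they coincide (`ext_of_mgf_eqOn_Ioo`).
-/

open MeasureTheory Real
open ProbabilityTheory Filter Topology
open scoped ENNReal

/-- The 3-deck of an extended nonnegative function, as a lower integral. -/
noncomputable def deck (φ : ℝ → ℝ≥0∞) (p : ℝ × ℝ) : ℝ≥0∞ :=
  ∫⁻ t, φ t * φ (t + p.1) * φ (t + p.2)

/-- The two-sided Laplace transform, with the sign convention of moment generating functions. -/
noncomputable def laplace (φ : ℝ → ℝ≥0∞) (s : ℝ) : ℝ≥0∞ :=
  ∫⁻ x, φ x * ENNReal.ofReal (exp (s * x))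

lemma measurable_deck {φ : ℝ → ℝ≥0∞} (hφ : Measurable φ) : Measurable (deck φ) := by
  unfold deck
  exact Measurable.lintegral_prod_right'
    (f := fun q : (ℝ × ℝ) × ℝ => φ q.2 * φ (q.2 + q.1.1) * φ (q.2 + q.1.2)) (by fun_prop)

lemma lintegral_translate_mul_exp (φ : ℝ → ℝ≥0∞) (t s : ℝ) :
    ∫⁻ x, φ (t + x) * ENNReal.ofReal (exp (s * x)) =
      ENNReal.ofReal (exp (-(s * t))) * laplace φ s := by
  have h := lintegral_add_left_eq_self (μ := (volume : Measure ℝ))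
    (fun x => φ x * ENNReal.ofReal (exp (s * (x - t)))) t
  simp only [add_sub_cancel_left] at h
  rw [h, laplace, ← lintegral_const_mul' _ _ ENNReal.ofReal_ne_top]
  refine lintegral_congr fun x => ?_
  rw [mul_left_comm, ← ENNReal.ofReal_mul (exp_pos _).le, ← exp_add]
  congr 3
  ring

/-- The Laplace transform of the 3-deck is a product of three Laplace transforms. -/
lemma lintegral_deck {φ : ℝ → ℝ≥0∞} (hφ : Measurable φ) (s r : ℝ) :
    ∫⁻ p : ℝ × ℝ, deck φ p *
        (ENNReal.ofReal (exp (s * p.1)) * ENNReal.ofReal (exp (r * p.2))) =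
      laplace φ s * laplace φ r * laplace φ (-s - r) := by
  have h1 : ∀ p : ℝ × ℝ, deck φ p *
      (ENNReal.ofReal (exp (s * p.1)) * ENNReal.ofReal (exp (r * p.2))) =
      ∫⁻ t, φ t * ((φ (t + p.1) * ENNReal.ofReal (exp (s * p.1))) *
        (φ (t + p.2) * ENNReal.ofReal (exp (r * p.2)))) := by
    intro p
    rw [deck, ← lintegral_mul_const' _ _ (ENNReal.mul_ne_top ENNReal.ofReal_ne_top
      ENNReal.ofReal_ne_top)]
    refine lintegral_congr fun t => ?_
    ring
  have h2 : ∀ t : ℝ, ∫⁻ p : ℝ × ℝ, φ t * ((φ (t + p.1) * ENNReal.ofReal (exp (s * p.1))) *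
        (φ (t + p.2) * ENNReal.ofReal (exp (r * p.2)))) =
      (laplace φ s * laplace φ r) * (φ t * ENNReal.ofReal (exp ((-s - r) * t))) := by
    intro t
    rw [lintegral_const_mul _ (by fun_prop), Measure.volume_eq_prod,
      lintegral_prod_mul (f := fun x => φ (t + x) * ENNReal.ofReal (exp (s * x)))
        (g := fun y => φ (t + y) * ENNReal.ofReal (exp (r * y))) (by fun_prop) (by fun_prop),
      lintegral_translate_mul_exp, lintegral_translate_mul_exp]
    have : (-s - r) * t = -(s * t) + -(r * t) := by ring
    rw [this, exp_add, ENNReal.ofReal_mul (exp_pos _).le]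
    ring
  rw [lintegral_congr h1, lintegral_lintegral_swap
    (Measurable.aemeasurable (by unfold Function.uncurry; fun_prop)),
    lintegral_congr h2, lintegral_const_mul _ (by fun_prop)]
  rfl

lemma lintegral_exp_withDensity {φ : ℝ → ℝ≥0∞} (hφ : Measurable φ) (s : ℝ) :
    ∫⁻ x, ENNReal.ofReal (exp (s * x)) ∂(volume.withDensity φ) = laplace φ s := by
  rw [lintegral_withDensity_eq_lintegral_mul _ hφ (by fun_prop)]
  rfl

lemma mgf_withDensity {φ : ℝ → ℝ≥0∞} (hφ : Measurable φ) (s : ℝ) :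
    mgf id (volume.withDensity φ) s = (laplace φ s).toReal := by
  rw [← lintegral_exp_withDensity hφ, mgf, integral_eq_lintegral_of_nonneg_ae]
  · rfl
  · exact .of_forall fun x => (exp_pos _).le
  · exact Measurable.aestronglyMeasurable (by fun_prop)

lemma integrable_exp_withDensity {φ : ℝ → ℝ≥0∞} (hφ : Measurable φ) {s : ℝ}
    (h : laplace φ s ≠ ∞) :
    Integrable (fun x => exp (s * id x)) (volume.withDensity φ) := by
  rw [← lintegral_ofReal_ne_top_iff_integrable]
  · simpa only [id, lintegral_exp_withDensity hφ] using h
  · exact Measurable.aestronglyMeasurable (by fun_prop)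
  · exact .of_forall fun x => (exp_pos _).le

lemma laplace_zero (φ : ℝ → ℝ≥0∞) : laplace φ 0 = ∫⁻ x, φ x := by simp [laplace]

lemma laplace_eq_zero_iff {φ : ℝ → ℝ≥0∞} (hφ : Measurable φ) (s : ℝ) :
    laplace φ s = 0 ↔ φ =ᵐ[volume] 0 := by
  rw [laplace, lintegral_eq_zero_iff (by fun_prop)]
  refine ⟨fun h => ?_, fun h => ?_⟩ <;> filter_upwards [h] with x hx
  · simpa [(exp_pos _).not_ge] using hx
  · simp [hx]

/-- A differentiable function satisfying `k s + k r + k (-s - r) = 0` near the origin is linear: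
oddness turns the relation into local additivity, so the derivative is constant. -/
lemma linear_of_triple_sum_eq_zero {k : ℝ → ℝ} {M : ℝ} (hM : 0 < M)
    (hk : DifferentiableOn ℝ k (Set.Ioo (-M) M))
    (h : ∀ s ∈ Set.Ioo (-M) M, ∀ r ∈ Set.Ioo (-M) M, -s - r ∈ Set.Ioo (-M) M →
      k s + k r + k (-s - r) = 0) :
    ∃ a : ℝ, ∀ s ∈ Set.Ioo (-M) M, k s = a * s := by
  have h0 : (0 : ℝ) ∈ Set.Ioo (-M) M := ⟨by linarith, hM⟩
  have hneg : ∀ s ∈ Set.Ioo (-M) M, -s ∈ Set.Ioo (-M) M :=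
    fun s hs => ⟨by linarith [hs.2], by linarith [hs.1]⟩
  have hk0 : k 0 = 0 := by
    have := h 0 h0 0 h0 (by simpa using hM)
    simp only [neg_zero, sub_zero] at this
    linarith
  have hodd : ∀ s ∈ Set.Ioo (-M) M, k (-s) = -k s := by
    intro s hs
    have := h s hs 0 h0 (by simpa using hneg s hs)
    simp only [sub_zero, hk0] at this
    linarith
  have hat : ∀ x ∈ Set.Ioo (-M) M, DifferentiableAt ℝ k x :=
    fun x hx => (hk x hx).differentiableAt (isOpen_Ioo.mem_nhds hx)
  have hderiv : ∀ x ∈ Set.Ioo (-M) M, deriv k x = deriv k 0 := by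
    intro x hx
    have e : (fun y => k (x + y)) =ᶠ[𝓝 0] fun y => k x + k y := by
      have c : ContinuousAt (fun y : ℝ => x + y) 0 := by fun_prop
      filter_upwards [isOpen_Ioo.mem_nhds h0,
        c.preimage_mem_nhds (isOpen_Ioo.mem_nhds (by simpa using hx))] with y hy hxy
      have hxy' : x + y ∈ Set.Ioo (-M) M := hxy
      have e1 : -x - y = -(x + y) := by ring
      have := h x hx y hy (by rw [e1]; exact hneg _ hxy')
      rw [e1, hodd _ hxy'] at this
      linarith
    have := e.deriv_eq
    rwa [deriv_comp_const_add, deriv_const_add, add_zero] at this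
  refine ⟨deriv k 0, fun s hs => ?_⟩
  have := isOpen_Ioo.is_const_of_deriv_eq_zero (𝕜 := ℝ) (s := Set.Ioo (-M) M)
    (f := fun x => k x - deriv k 0 * x) isPreconnected_Ioo
    (hk.sub (by fun_prop)) (fun x hx => by
      have hd : HasDerivAt (fun x => k x - deriv k 0 * x) (deriv k x - deriv k 0 * 1) x :=
        (hat x hx).hasDerivAt.sub ((hasDerivAt_id x).const_mul _)
      simp [hd.deriv, hderiv x hx]) hs h0
  simp only [hk0] at this
  linarith

/-- Finite measures on `ℝ` with the same finite moment generating function on an interval around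
the origin are equal: the complex moment generating functions agree on a vertical strip by the
identity theorem, hence so do the characteristic functions. -/
lemma ext_of_mgf_eqOn_Ioo {μ ν : Measure ℝ} [IsFiniteMeasure μ] [IsFiniteMeasure ν] {M : ℝ}
    (hM : 0 < M) (hμ : Set.Ioo (-M) M ⊆ integrableExpSet id μ)
    (hν : Set.Ioo (-M) M ⊆ integrableExpSet id ν)
    (h : Set.EqOn (mgf id μ) (mgf id ν) (Set.Ioo (-M) M)) : μ = ν := by
  have hμ' := interior_maximal hμ isOpen_Ioo
  have hν' := interior_maximal hν isOpen_Ioo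
  have h0 : (0 : ℝ) ∈ Set.Ioo (-M) M := ⟨by linarith, hM⟩
  have key : Set.EqOn (complexMGF id μ) (complexMGF id ν)
      {z : ℂ | z.re ∈ Set.Ioo (-M) M} := by
    refine AnalyticOnNhd.eqOn_of_preconnected_of_frequently_eq
      (analyticOnNhd_complexMGF.mono fun z hz => hμ' hz)
      (analyticOnNhd_complexMGF.mono fun z hz => hν' hz)
      ((convex_Ioo (-M) M).linear_preimage Complex.reLm).isPreconnected
      (z₀ := ((0 : ℝ) : ℂ)) (by simpa using hM) ?_
    have h_real : ∃ᶠ x : ℝ in 𝓝[≠] 0, complexMGF id μ x = complexMGF id ν x := by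
      refine Eventually.frequently ?_
      filter_upwards [nhdsWithin_le_nhds (isOpen_Ioo.mem_nhds h0)] with x hx
      rw [complexMGF_ofReal, complexMGF_ofReal, h hx]
    have ht : Tendsto (fun x : ℝ => (x : ℂ)) (𝓝[≠] 0) (𝓝[≠] ((0 : ℝ) : ℂ)) :=
      tendsto_nhdsWithin_iff.2 ⟨Complex.continuous_ofReal.continuousAt.mono_left
        nhdsWithin_le_nhds, by
          filter_upwards [self_mem_nhdsWithin] with x hx
          simpa using hx⟩
    exact ht.frequently h_real
  refine Measure.ext_of_charFun (funext fun t => ?_)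
  rw [← complexMGF_id_mul_I, ← complexMGF_id_mul_I]
  exact key (by simpa using hM)

/-- The Laplace transform form of the reconstruction: it is enough that all triple products
`L φ s * L φ r * L φ (-s - r)` agree. -/
lemma ae_eq_translate_of_laplace {φ ψ : ℝ → ℝ≥0∞} (hφ : Measurable φ) (hψ : Measurable ψ)
    {M : ℝ} (hM : 0 < M) (hfin : ∀ s ∈ Set.Ioo (-M) M, laplace φ s ≠ ∞)
    (h : ∀ s r : ℝ, laplace φ s * laplace φ r * laplace φ (-s - r) =
      laplace ψ s * laplace ψ r * laplace ψ (-s - r)) :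
    ∃ a : ℝ, ψ =ᵐ[volume] fun x => φ (x - a) := by
  have h0 : (0 : ℝ) ∈ Set.Ioo (-M) M := ⟨by linarith, hM⟩
  have hzero : φ =ᵐ[volume] 0 ↔ ψ =ᵐ[volume] 0 := by
    have h00 := h 0 0
    simp only [neg_zero, sub_zero] at h00
    rw [← laplace_eq_zero_iff hφ 0, ← laplace_eq_zero_iff hψ 0]
    constructor <;> intro h' <;> simp_all
  by_cases hφ0 : φ =ᵐ[volume] 0
  · refine ⟨0, (hzero.1 hφ0).trans ?_⟩
    simpa using hφ0.symm
  have hψ0 := fun h' => hφ0 (hzero.2 h')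
  have pφ : ∀ s, laplace φ s ≠ 0 := fun s h' => hφ0 ((laplace_eq_zero_iff hφ s).1 h')
  have pψ : ∀ s, laplace ψ s ≠ 0 := fun s h' => hψ0 ((laplace_eq_zero_iff hψ s).1 h')
  have hfin' : ∀ s ∈ Set.Ioo (-M) M, laplace ψ s ≠ ∞ := by
    intro s hs htop
    have e := h s 0
    rw [htop, ENNReal.top_mul (pψ 0), ENNReal.top_mul (pψ _)] at e
    refine ENNReal.mul_ne_top (ENNReal.mul_ne_top (hfin s hs) (hfin 0 h0)) (hfin _ ?_) e
    exact ⟨by linarith [hs.2], by linarith [hs.1]⟩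
  set μ := volume.withDensity φ with hμdef
  set ν := volume.withDensity ψ with hνdef
  have : IsFiniteMeasure μ :=
    isFiniteMeasure_withDensity (by rw [← laplace_zero]; exact hfin 0 h0)
  have : IsFiniteMeasure ν :=
    isFiniteMeasure_withDensity (by rw [← laplace_zero]; exact hfin' 0 h0)
  have iμ : Set.Ioo (-M) M ⊆ integrableExpSet id μ :=
    fun s hs => integrable_exp_withDensity hφ (hfin s hs)
  have iν : Set.Ioo (-M) M ⊆ integrableExpSet id ν :=
    fun s hs => integrable_exp_withDensity hψ (hfin' s hs)
  have qμ : ∀ s ∈ Set.Ioo (-M) M, 0 < mgf id μ s := fun s hs => by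
    rw [mgf_withDensity hφ]; exact ENNReal.toReal_pos (pφ s) (hfin s hs)
  have qν : ∀ s ∈ Set.Ioo (-M) M, 0 < mgf id ν s := fun s hs => by
    rw [mgf_withDensity hψ]; exact ENNReal.toReal_pos (pψ s) (hfin' s hs)
  have hmgf : ∀ s r, mgf id μ s * mgf id μ r * mgf id μ (-s - r) =
      mgf id ν s * mgf id ν r * mgf id ν (-s - r) := by
    intro s r
    simp only [hμdef, hνdef, mgf_withDensity hφ, mgf_withDensity hψ, ← ENNReal.toReal_mul, h s r]
  obtain ⟨a, ha⟩ := linear_of_triple_sum_eq_zero (k := fun s => cgf id ν s - cgf id μ s) hM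
    (fun s hs => ((analyticAt_cgf (interior_maximal iν isOpen_Ioo hs)).differentiableAt.sub
      (analyticAt_cgf (interior_maximal iμ isOpen_Ioo hs)).differentiableAt).differentiableWithinAt)
    (by
      intro s hs r hr hsr
      have e := congrArg Real.log (hmgf s r)
      rw [Real.log_mul (mul_pos (qμ s hs) (qμ r hr)).ne' (qμ _ hsr).ne',
        Real.log_mul (qμ s hs).ne' (qμ r hr).ne',
        Real.log_mul (mul_pos (qν s hs) (qν r hr)).ne' (qν _ hsr).ne',
        Real.log_mul (qν s hs).ne' (qν r hr).ne'] at e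
      simp only [cgf]
      linarith)
  refine ⟨a, ?_⟩
  have hφa : Measurable fun x => φ (x - a) := by fun_prop
  have hlap : ∀ s, laplace (fun x => φ (x - a)) s =
      ENNReal.ofReal (exp (a * s)) * laplace φ s := by
    intro s
    have := lintegral_translate_mul_exp φ (-a) s
    rw [show -(s * -a) = a * s by ring] at this
    rw [← this, laplace]
    simp only [neg_add_eq_sub]
  have hlapfin : ∀ s ∈ Set.Ioo (-M) M, laplace (fun x => φ (x - a)) s ≠ ∞ := fun s hs => by
    rw [hlap]; exact ENNReal.mul_ne_top ENNReal.ofReal_ne_top (hfin s hs)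
  have : IsFiniteMeasure (volume.withDensity fun x => φ (x - a)) :=
    isFiniteMeasure_withDensity (by rw [← laplace_zero]; exact hlapfin 0 h0)
  have heq : ν = volume.withDensity fun x => φ (x - a) := by
    refine ext_of_mgf_eqOn_Ioo hM iν
      (fun s hs => integrable_exp_withDensity hφa (hlapfin s hs)) fun s hs => ?_
    rw [mgf_withDensity hφa, hlap, ENNReal.toReal_mul, ENNReal.toReal_ofReal (exp_pos _).le,
      ← mgf_withDensity hφ, ← hμdef, ← ha s hs, Real.exp_sub]
    simp only [cgf, Real.exp_log (qν s hs), Real.exp_log (qμ s hs)]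
    exact (div_mul_cancel₀ _ (qμ s hs).ne').symm
  exact (withDensity_eq_iff_of_sigmaFinite hψ.aemeasurable hφa.aemeasurable).1 heq

lemma integral_deck_s5 {f : ℝ → ℝ} (hf : AEMeasurable f) (hf0 : ∀ t, 0 ≤ f t) {φ : ℝ → ℝ≥0∞}
    (hφ : (fun t => ENNReal.ofReal (f t)) =ᵐ[volume] φ) (p : ℝ × ℝ) :
    ∫ t : ℝ, f t * f (t + p.1) * f (t + p.2) = (deck φ p).toReal := by
  have hq : ∀ x : ℝ, Measure.QuasiMeasurePreserving (fun t : ℝ => t + x) volume volume :=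
    fun x => (measurePreserving_add_right volume x).quasiMeasurePreserving
  rw [integral_eq_lintegral_of_nonneg_ae
    (.of_forall fun t => mul_nonneg (mul_nonneg (hf0 _) (hf0 _)) (hf0 _))
    ((hf.mul (hf.comp_quasiMeasurePreserving (hq p.1))).mul
      (hf.comp_quasiMeasurePreserving (hq p.2))).aestronglyMeasurable, deck]
  congr 1
  refine lintegral_congr_ae ?_
  filter_upwards [hφ, (hq p.1).ae_eq_comp hφ, (hq p.2).ae_eq_comp hφ] with t h1 h2 h3
  simp only [Function.comp_apply] at h2 h3
  rw [ENNReal.ofReal_mul (mul_nonneg (hf0 _) (hf0 _)), ENNReal.ofReal_mul (hf0 _), h1, h2, h3]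

lemma deck_ae_lt_top {φ : ℝ → ℝ≥0∞} (hφ : Measurable φ) (h : laplace φ 0 ≠ ∞) :
    ∀ᵐ p, deck φ p < ∞ := by
  refine ae_lt_top (measurable_deck hφ) ?_
  have := lintegral_deck hφ 0 0
  simp only [zero_mul, exp_zero, ENNReal.ofReal_one, mul_one, neg_zero, sub_zero] at this
  rw [this]
  exact ENNReal.mul_ne_top (ENNReal.mul_ne_top h h) h

/-- a nonnegative integrable function with a finite exponential moment
`∫ |f(x)| e^{M|x|} dx < ∞` for some `M > 0` is determined up to translation by
its 3-deck. -/
theorem expMoment_determined_by_3deck (f g : ℝ → ℝ)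
    (hf : Integrable f) (hg : Integrable g)
    (hf0 : ∀ t, 0 ≤ f t) (hg0 : ∀ t, 0 ≤ g t)
    (hM : ∃ M : ℝ, 0 < M ∧ Integrable (fun x => |f x| * Real.exp (M * |x|)))
    (hN : ∀ᵐ p : ℝ × ℝ,
      (∫ t : ℝ, f t * f (t + p.1) * f (t + p.2)) =
      (∫ t : ℝ, g t * g (t + p.1) * g (t + p.2))) :
    ∃ a : ℝ, ∀ᵐ x : ℝ, g x = f (x - a) := by
  obtain ⟨M, hM0, hMi⟩ := hM
  -- Measurable representatives make Tonelli applicable.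
  have hφe := hf.aemeasurable.ennreal_ofReal.ae_eq_mk
  have hφm := hf.aemeasurable.ennreal_ofReal.measurable_mk
  have hψe := hg.aemeasurable.ennreal_ofReal.ae_eq_mk
  have hψm := hg.aemeasurable.ennreal_ofReal.measurable_mk
  set φ := hf.aemeasurable.ennreal_ofReal.mk _
  set ψ := hg.aemeasurable.ennreal_ofReal.mk _
  have hfin : ∀ s ∈ Set.Ioo (-M) M, laplace φ s ≠ ∞ := by
    intro s hs
    refine ne_top_of_le_ne_top hMi.lintegral_lt_top.ne (lintegral_mono_ae ?_)
    filter_upwards [hφe] with x hx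
    rw [← hx, ← ENNReal.ofReal_mul (hf0 x), abs_of_nonneg (hf0 x)]
    refine ENNReal.ofReal_le_ofReal (mul_le_mul_of_nonneg_left (exp_le_exp.2 ?_) (hf0 x))
    calc s * x ≤ |s * x| := le_abs_self _
      _ = |s| * |x| := abs_mul _ _
      _ ≤ M * |x| := mul_le_mul_of_nonneg_right (abs_lt.2 hs).le (abs_nonneg x)
  have hφ0 : laplace φ 0 ≠ ∞ := hfin 0 ⟨by linarith, hM0⟩
  have hψ0 : laplace ψ 0 ≠ ∞ := by
    rw [laplace_zero, ← lintegral_congr_ae hψe]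
    exact hg.lintegral_lt_top.ne
  have hdeck : deck φ =ᵐ[volume] deck ψ := by
    filter_upwards [hN, deck_ae_lt_top hφm hφ0, deck_ae_lt_top hψm hψ0] with p hp h1 h2
    rw [integral_deck_s5 hf.aemeasurable hf0 hφe, integral_deck_s5 hg.aemeasurable hg0 hψe] at hp
    exact (ENNReal.toReal_eq_toReal_iff' h1.ne h2.ne).1 hp
  obtain ⟨a, ha⟩ := ae_eq_translate_of_laplace hφm hψm hM0 hfin fun s r => by
    rw [← lintegral_deck hφm, ← lintegral_deck hψm]
    refine lintegral_congr_ae ?_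
    filter_upwards [hdeck] with p hp
    rw [hp]
  refine ⟨a, ?_⟩
  have hφa := (measurePreserving_sub_right volume a).quasiMeasurePreserving.ae_eq_comp hφe
  filter_upwards [ha, hψe, hφa] with x h1 h2 h3
  simp only [Function.comp_apply] at h3
  rw [← h2, ← h3] at h1
  exact (ENNReal.ofReal_eq_ofReal_iff (hg0 x) (hf0 _)).1 h1
end

section
/- Let f, g ∈ L¹(ℝ) be nonnegative. If N^k_f = N^k_g for every integer k ≥ 2, then g is a translate of f, i.e., g(x) = f(x−a) almost everywhere for some a ∈ ℝ. -/
open MeasureTheory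

/-!
The argument is on the Fourier side. Write `φ`, `ψ` for the Fourier transforms of `f`, `g`
(`deckFourier`). Taking the Fourier transform of the `(n+1)`-deck gives (`deckFourier_deck`)
`φ(-∑ ξᵢ) ∏ φ(ξᵢ)`, so the hypothesis says that these products agree for `φ` and `ψ`, for all
`n ≥ 1` and all frequencies. With `n = 1` and `ξ = 0`, nonnegativity gives `φ(0) = ψ(0) = ∫ f`; if
this is `0` then both functions vanish almost everywhere. Otherwise `h = ψ / φ` is defined near
`0`, and the cases `n = 1, 2` say that `h` is unimodular and locally multiplicative there. A
continuous local character is an exponential (`exists_local_exp`), so `h(x) = exp(i a x)` near `0`.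

A zero of `φ` may separate a frequency `ξ` from `0`, and the large decks are what crosses it:
for large `n` the point `ξ / n` is near `0`, and the identity
`φ(ξ) φ(-ξ/n)ⁿ = ψ(ξ) ψ(-ξ/n)ⁿ` gives `ψ(ξ) = φ(ξ) exp(i a ξ)` (`exists_phase`). By
injectivity of the Fourier transform, `g` is the translate of `f` by `a`.
-/

/-- The Fourier transform of a real function, normalised as the characteristic function of the
measure with density `f`. -/
noncomputable def deckFourier (f : ℝ → ℝ) (ξ : ℝ) : ℂ :=
  ∫ t : ℝ, (f t : ℂ) * Complex.exp (ξ * t * Complex.I)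

lemma deckFourier_eq_charFun {f : ℝ → ℝ} (hf : Integrable f) (hf0 : ∀ t, 0 ≤ f t) (ξ : ℝ) :
    deckFourier f ξ = charFun (volume.withDensity fun t => ENNReal.ofReal (f t)) ξ := by
  rw [charFun_apply_real, integral_withDensity_eq_integral_toReal_smul₀
    hf.aemeasurable.ennreal_ofReal (by simp)]
  simp [deckFourier, ENNReal.toReal_ofReal (hf0 _)]

lemma deckFourier_continuous {f : ℝ → ℝ} (hf : Integrable f) (hf0 : ∀ t, 0 ≤ f t) :
    Continuous (deckFourier f) := by
  have := isFiniteMeasure_withDensity_ofReal hf.2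
  rw [funext (deckFourier_eq_charFun hf hf0)]
  fun_prop

lemma deckFourier_neg {f : ℝ → ℝ} (hf : Integrable f) (hf0 : ∀ t, 0 ≤ f t) (ξ : ℝ) :
    deckFourier f (-ξ) = starRingEnd ℂ (deckFourier f ξ) := by
  simp only [deckFourier_eq_charFun hf hf0, charFun_neg]

lemma deckFourier_zero (f : ℝ → ℝ) : deckFourier f 0 = ((∫ t, f t : ℝ) : ℂ) := by
  simp [deckFourier, integral_complex_ofReal]

lemma deckFourier_translate (f : ℝ → ℝ) (a ξ : ℝ) :
    deckFourier (fun t => f (t - a)) ξ = deckFourier f ξ * Complex.exp (a * ξ * Complex.I) := by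
  unfold deckFourier
  rw [← integral_add_right_eq_self _ a, ← integral_mul_const]
  congr 1
  ext t
  simp only [add_sub_cancel_right]
  rw [mul_assoc (f t : ℂ), ← Complex.exp_add]
  push_cast
  ring_nf

/-- Injectivity of the Fourier transform on nonnegative integrable functions. -/
lemma ae_eq_of_deckFourier_eq {f g : ℝ → ℝ} (hf : Integrable f) (hg : Integrable g)
    (hf0 : ∀ t, 0 ≤ f t) (hg0 : ∀ t, 0 ≤ g t) (h : ∀ ξ, deckFourier f ξ = deckFourier g ξ) :
    f =ᵐ[volume] g := by
  have := isFiniteMeasure_withDensity_ofReal hf.2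
  have := isFiniteMeasure_withDensity_ofReal hg.2
  have key : (volume.withDensity fun t => ENNReal.ofReal (f t))
      = volume.withDensity fun t => ENNReal.ofReal (g t) := by
    apply Measure.ext_of_charFun
    ext ξ
    rw [← deckFourier_eq_charFun hf hf0, ← deckFourier_eq_charFun hg hg0, h]
  rw [withDensity_eq_iff_of_sigmaFinite hf.aemeasurable.ennreal_ofReal
    hg.aemeasurable.ennreal_ofReal] at key
  filter_upwards [key] with t ht
  exact (ENNReal.ofReal_eq_ofReal_iff (hf0 t) (hg0 t)).1 ht

/-- The Fourier transform of the `(n+1)`-deck at `ξ` is `φ(-∑ ξᵢ) ∏ φ(ξᵢ)`. -/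
lemma deckFourier_deck {f : ℝ → ℝ} (hf : Integrable f) {n : ℕ} (ξ : Fin n → ℝ) :
    ∫ x : Fin n → ℝ, ((∫ t : ℝ, f t * ∏ i, f (t + x i) : ℝ) : ℂ) *
        ∏ i, Complex.exp (ξ i * x i * Complex.I)
      = deckFourier f (-∑ i, ξ i) * ∏ i, deckFourier f (ξ i) := by
  have hInt : ∀ η : ℝ, Integrable fun t : ℝ => (f t : ℂ) * Complex.exp (η * t * Complex.I) := by
    intro η
    refine hf.ofReal.mul_bdd (c := 1) (by fun_prop) (Filter.Eventually.of_forall fun t => ?_)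
    rw [← Complex.ofReal_mul, Complex.norm_exp_ofReal_mul_I]
  let A : ℝ → ℂ := fun t => (f t : ℂ) * Complex.exp ((-∑ i, ξ i : ℝ) * t * Complex.I)
  let B : (Fin n → ℝ) → ℂ := fun y => ∏ i, ((f (y i) : ℂ) * Complex.exp (ξ i * y i * Complex.I))
  have hB : Integrable B := Integrable.fintype_prod
    (f := fun i (y : ℝ) => (f y : ℂ) * Complex.exp (ξ i * y * Complex.I)) fun i => hInt _
  have hG : Integrable (fun p : ℝ × (Fin n → ℝ) => A p.1 * B p.2) (volume.prod volume) :=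
    (hInt _).mul_prod hB
  -- The shear `(t, x) ↦ (t, x + t)` turns the product `A ⊗ B` into the integrand of the deck.
  have hshear : MeasurePreserving
      (fun p : ℝ × (Fin n → ℝ) => (p.1, p.2 + fun _ => p.1))
      (volume.prod volume) (volume.prod volume) := by
    refine (MeasurePreserving.id volume).skew_product (g := fun t x => x + fun _ => t) ?_ ?_
    · fun_prop
    · exact Filter.Eventually.of_forall fun t => map_add_right_eq_self volume _
  have hcomp : Integrable (fun p : ℝ × (Fin n → ℝ) => A p.1 * B (p.2 + fun _ => p.1))
      (volume.prod volume) := hshear.integrable_comp_of_integrable hG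
  have hval : ∫ p : ℝ × (Fin n → ℝ), A p.1 * B (p.2 + fun _ => p.1) ∂(volume.prod volume)
      = (∫ t, A t) * ∫ y, B y := by
    rw [← integral_prod_mul]
    have hae : AEStronglyMeasurable (fun p : ℝ × (Fin n → ℝ) => A p.1 * B p.2)
      (Measure.map (fun p : ℝ × (Fin n → ℝ) => (p.1, p.2 + fun _ => p.1))
        (volume.prod volume)) := by
      rw [hshear.map_eq]; exact hG.1
    conv_rhs => rw [← hshear.map_eq]
    rw [integral_map hshear.1.aemeasurable hae]
  have hprod : ∫ y, B y = ∏ i, deckFourier f (ξ i) :=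
    integral_fintype_prod_volume_eq_prod
      (f := fun i (y : ℝ) => (f y : ℂ) * Complex.exp (ξ i * y * Complex.I))
  rw [hprod] at hval
  change _ = (∫ t, A t) * _
  rw [← hval, integral_prod_symm _ hcomp]
  congr 1
  ext x
  rw [← integral_complex_ofReal, ← integral_mul_const]
  congr 1
  ext t
  simp only [A, B, Pi.add_apply, Finset.prod_mul_distrib, ← Complex.exp_sum]
  have : Complex.exp (∑ i, ξ i * x i * Complex.I)
      = Complex.exp ((-∑ i, ξ i : ℝ) * t * Complex.I)
        * Complex.exp (∑ i, ξ i * (x i + t : ℝ) * Complex.I) := by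
    rw [← Complex.exp_add]
    congr 1
    push_cast
    simp only [mul_add, add_mul, Finset.sum_add_distrib, Finset.sum_mul, neg_mul]
    ring
  rw [this]
  push_cast
  simp only [add_comm t]
  ring

/-- A continuous function on `ℝ` that is multiplicative near `0` is an exponential near `0`:
convolving with an indicator shows that it is differentiable and satisfies `H' = z H`. -/
lemma exists_local_exp {H : ℝ → ℂ} (hc : Continuous H) (h0 : H 0 = 1) {R : ℝ} (hR : 0 < R)
    (hmul : ∀ x y, |x| < R → |y| < R → H (x + y) = H x * H y) :
    ∃ z : ℂ, ∀ x, |x| < R → H x = Complex.exp (z * x) := by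
  let F : ℝ → ℂ := fun u => ∫ t in (0 : ℝ)..u, H t
  have hF : ∀ u, HasDerivAt F (H u) u := fun u =>
    intervalIntegral.integral_hasDerivAt_right (hc.intervalIntegrable _ _)
      hc.stronglyMeasurable.stronglyMeasurableAtFilter hc.continuousAt
  -- `F 0 = 0` and `F' 0 = 1`, so `F` does not vanish at small positive points.
  obtain ⟨s, hs, hs0, hsR⟩ : ∃ s, F s ≠ 0 ∧ 0 < s ∧ s < R := by
    have h1 : ∀ᶠ s in nhdsWithin (0 : ℝ) {0}ᶜ, F s ≠ 0 :=
      (hF 0).eventually_ne (by rw [h0]; exact one_ne_zero)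
    have h2 : ∀ᶠ s in nhdsWithin (0 : ℝ) (Set.Ioi 0), F s ≠ 0 :=
      h1.filter_mono (nhdsWithin_mono _ fun x hx => ne_of_gt hx)
    have h3 := h2.and (Ioo_mem_nhdsGT hR)
    obtain ⟨s, hs⟩ := h3.exists
    exact ⟨s, hs.1, hs.2.1, hs.2.2⟩
  have hs' : |s| < R := by rwa [abs_of_pos hs0]
  have hrep : ∀ x, |x| < R → H x = (F (x + s) - F x) / F s := by
    intro x hx
    rw [eq_div_iff hs]
    have e1 : F (x + s) - F x = ∫ t in x..(x + s), H t :=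
      intervalIntegral.integral_interval_sub_left (hc.intervalIntegrable _ _)
        (hc.intervalIntegrable _ _)
    have e2 : ∫ t in (0 : ℝ)..s, H (x + t) = ∫ t in x..(x + s), H t := by
      rw [intervalIntegral.integral_comp_add_left, add_zero]
    rw [e1, ← e2, ← intervalIntegral.integral_const_mul]
    refine intervalIntegral.integral_congr fun t ht => ?_
    rw [Set.uIcc_of_le hs0.le] at ht
    exact (hmul x t hx (by rw [abs_of_nonneg ht.1]; exact ht.2.trans_lt hsR)).symm
  have hopen : IsOpen (Set.Ioo (-R) R) := isOpen_Ioo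
  let z : ℂ := (H s - 1) / F s
  have hH' : ∀ x ∈ Set.Ioo (-R) R, HasDerivAt H (z * H x) x := by
    intro x hx
    have hd : HasDerivAt (fun y => (F (y + s) - F y) / F s) ((H (x + s) - H x) / F s) x :=
      (((hF (x + s)).comp_add_const x s).sub (hF x)).div_const _
    have heq : (fun y => (F (y + s) - F y) / F s) =ᶠ[nhds x] H := by
      filter_upwards [hopen.mem_nhds hx] with y hy
      exact (hrep y (abs_lt.2 hy)).symm
    have hv : z * H x = (H (x + s) - H x) / F s := by
      rw [hmul x s (abs_lt.2 hx) hs']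
      simp only [z]
      ring
    rw [hv]
    exact hd.congr_of_eventuallyEq heq.symm
  refine ⟨z, fun x hx => ?_⟩
  have hE : ∀ y : ℝ, HasDerivAt (fun y : ℝ => Complex.exp (-(z * y)))
      (Complex.exp (-(z * y)) * -z) y := by
    intro y
    have h1 := ((Complex.ofRealCLM.hasDerivAt (x := y)).const_mul z).neg
    rw [Complex.ofRealCLM_apply, Complex.ofReal_one, mul_one] at h1
    exact h1.cexp
  have hP : ∀ y ∈ Set.Ioo (-R) R, HasDerivAt (fun y : ℝ => H y * Complex.exp (-(z * y))) 0 y := by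
    intro y hy
    have hv : (0 : ℂ) = z * H y * Complex.exp (-(z * y)) + H y * (Complex.exp (-(z * y)) * -z) := by
      ring
    rw [hv]
    exact (hH' y hy).mul (hE y)
  have hconst := hopen.eqOn_of_deriv_eq (f := fun y : ℝ => H y * Complex.exp (-(z * y)))
    (g := fun _ => (1 : ℂ)) (x := 0) isPreconnected_Ioo
    (fun y hy => (hP y hy).differentiableAt.differentiableWithinAt)
    (differentiableOn_const _) (fun y hy => by simp [(hP y hy).deriv])
    ⟨by linarith, hR⟩ (by simp [h0]) (abs_lt.1 hx)
  simp only [Complex.exp_neg] at hconst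
  exact (mul_inv_eq_one₀ (Complex.exp_ne_zero _)).1 hconst

/-- Two continuous Hermitian functions, equal and nonzero at `0`, with the same values of
`φ(-∑ ξᵢ) ∏ φ(ξᵢ)`, differ by a phase `exp(i a ξ)`. -/
lemma exists_phase {φ ψ : ℝ → ℂ} (hφ : Continuous φ) (hψ : Continuous ψ)
    (hφ0 : φ 0 ≠ 0) (h0 : ψ 0 = φ 0)
    (hφn : ∀ x, φ (-x) = starRingEnd ℂ (φ x)) (hψn : ∀ x, ψ (-x) = starRingEnd ℂ (ψ x))
    (H : ∀ n : ℕ, 1 ≤ n → ∀ ξ : Fin n → ℝ,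
      φ (-∑ i, ξ i) * ∏ i, φ (ξ i) = ψ (-∑ i, ξ i) * ∏ i, ψ (ξ i)) :
    ∃ a : ℝ, ∀ ξ : ℝ, ψ ξ = φ ξ * Complex.exp (a * ξ * Complex.I) := by
  obtain ⟨δ, hδ, hball⟩ : ∃ δ > 0, ∀ x, |x| ≤ δ → φ x ≠ 0 := by
    obtain ⟨δ, hδ, h⟩ := Metric.eventually_nhds_iff.1 (hφ.continuousAt.eventually_ne hφ0)
    refine ⟨δ / 2, half_pos hδ, fun x hx => h ?_⟩
    rw [Real.dist_eq, sub_zero]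
    linarith
  have H2 : ∀ x, φ (-x) * φ x = ψ (-x) * ψ x := fun x => by simpa using H 1 le_rfl fun _ => x
  have H3 : ∀ x y, φ (-(x + y)) * (φ x * φ y) = ψ (-(x + y)) * (ψ x * ψ y) := fun x y => by
    simpa [Fin.sum_univ_two, Fin.prod_univ_two] using H 2 (by norm_num) ![x, y]
  have Hn : ∀ n : ℕ, 1 ≤ n → ∀ x, φ (-(n * x)) * φ x ^ n = ψ (-(n * x)) * ψ x ^ n :=
    fun n hn x => by simpa using H n hn fun _ => x
  have hnorm : ∀ x, ‖ψ x‖ = ‖φ x‖ := by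
    intro x
    have h := congrArg norm (H2 x)
    rw [hφn, hψn, norm_mul, norm_mul, RCLike.norm_conj, RCLike.norm_conj] at h
    nlinarith [norm_nonneg (φ x), norm_nonneg (ψ x)]
  have hψball : ∀ x, |x| ≤ δ → ψ x ≠ 0 := fun x hx => by
    rw [← norm_ne_zero_iff, hnorm, norm_ne_zero_iff]
    exact hball x hx
  -- The quotient `ψ / φ`, made continuous on all of `ℝ` by clamping its argument to `[-δ, δ]`.
  let c : ℝ → ℝ := fun x => max (-δ) (min δ x)
  have hcle : ∀ x, |c x| ≤ δ := fun x =>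
    abs_le.2 ⟨le_max_left _ _, max_le (by linarith) (min_le_left _ _)⟩
  have hcid : ∀ x, |x| ≤ δ → c x = x := fun x hx => by
    rw [abs_le] at hx
    simp only [c]
    rw [min_eq_right hx.2, max_eq_right hx.1]
  have hcc : Continuous c := by fun_prop
  obtain ⟨z, hz⟩ := exists_local_exp (H := fun x => ψ (c x) / φ (c x)) (R := δ / 2)
    ((hψ.comp hcc).div (hφ.comp hcc) fun x => hball _ (hcle x))
    (by simp only [hcid 0 (by simpa using hδ.le), h0]; exact div_self hφ0) (half_pos hδ) (by
      intro x y hx hy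
      have hxy : |x + y| ≤ δ := (abs_add_le x y).trans (by linarith)
      have hx' : |x| ≤ δ := by linarith
      have hy' : |y| ≤ δ := by linarith
      simp only [hcid _ hxy, hcid _ hx', hcid _ hy']
      have a1 := hball _ hxy
      have a2 := hball _ hx'
      have a3 := hball _ hy'
      have a4 : ψ (-(x + y)) ≠ 0 := hψball _ (by rwa [abs_neg])
      have e2 := H2 (x + y)
      have e3 := H3 x y
      rw [div_mul_div_comm, div_eq_div_iff a1 (mul_ne_zero a2 a3)]
      apply mul_left_cancel₀ a4
      linear_combination (-φ x * φ y) * e2 + φ (x + y) * e3)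
  have hz' : ∀ x, |x| < δ / 2 → ψ x = φ x * Complex.exp (z * x) := by
    intro x hx
    have hx' : |x| ≤ δ := by linarith
    have := hz x hx
    simp only [hcid _ hx'] at this
    rw [← this, mul_div_cancel₀ _ (hball x hx')]
  -- `ψ / φ` is unimodular, so the exponent is purely imaginary.
  have hre : z.re = 0 := by
    have hd : |δ / 4| < δ / 2 := by rw [abs_of_pos (by linarith)]; linarith
    have h := congrArg norm (hz' _ hd)
    rw [norm_mul, hnorm, Complex.norm_exp] at h
    have hne : ‖φ (δ / 4)‖ ≠ 0 := norm_ne_zero_iff.2 (hball _ (by linarith))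
    have h1 := (mul_eq_left₀ hne).1 h.symm
    rw [Real.exp_eq_one_iff, Complex.re_mul_ofReal] at h1
    rcases mul_eq_zero.1 h1 with h2 | h2
    · exact h2
    · linarith
  have hzI : z = z.im * Complex.I := by
    apply Complex.ext <;> simp [hre]
  refine ⟨z.im, fun ξ => ?_⟩
  obtain ⟨n, hn⟩ := exists_nat_gt (max 1 (|ξ| / (δ / 2)))
  have hn1 : (1 : ℝ) < n := (le_max_left _ _).trans_lt hn
  have hn0 : (0 : ℝ) < n := by linarith
  have hnξ : |-(ξ / n)| < δ / 2 := by
    rw [abs_neg, abs_div, abs_of_pos hn0, div_lt_iff₀ hn0]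
    have := (le_max_right _ _).trans_lt hn
    rw [div_lt_iff₀ (half_pos hδ)] at this
    linarith
  have key := Hn n (by exact_mod_cast hn1.le) (-(ξ / n))
  have harg : -((n : ℝ) * -(ξ / n)) = ξ := by field_simp
  rw [harg, hz' _ hnξ, mul_pow, ← Complex.exp_nat_mul] at key
  have hexp : (n : ℂ) * (z * ((-(ξ / n) : ℝ) : ℂ)) = -(z.im * ξ * Complex.I) := by
    have : (n : ℂ) ≠ 0 := by exact_mod_cast hn0.ne'
    conv_lhs => rw [hzI]
    push_cast
    field_simp
  rw [hexp, Complex.exp_neg] at key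
  have hp : φ (-(ξ / n)) ^ n ≠ 0 := pow_ne_zero _ (hball _ (by linarith))
  have hne := Complex.exp_ne_zero (z.im * ξ * Complex.I)
  field_simp at key
  exact key.symm

/-- if two nonnegative integrable functions on `ℝ` have the same
`k`-deck for every `k ≥ 2`, then they are translates of each other. -/
theorem all_kdecks_determine_translate (f g : ℝ → ℝ)
    (hf : Integrable f) (hg : Integrable g)
    (hf0 : ∀ t, 0 ≤ f t) (hg0 : ∀ t, 0 ≤ g t)
    (hN : ∀ k : ℕ, 2 ≤ k →
      ∀ᵐ x : Fin (k - 1) → ℝ,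
        (∫ t : ℝ, f t * ∏ i, f (t + x i)) = (∫ t : ℝ, g t * ∏ i, g (t + x i))) :
    ∃ a : ℝ, ∀ᵐ x : ℝ, g x = f (x - a) := by
  have H : ∀ n : ℕ, 1 ≤ n → ∀ ξ : Fin n → ℝ,
      deckFourier f (-∑ i, ξ i) * ∏ i, deckFourier f (ξ i)
        = deckFourier g (-∑ i, ξ i) * ∏ i, deckFourier g (ξ i) := by
    intro n hn ξ
    rw [← deckFourier_deck hf, ← deckFourier_deck hg]
    have h := hN (n + 1) (by omega)
    refine integral_congr_ae ?_
    filter_upwards [h] with x hx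
    exact congrArg (fun r : ℝ => (r : ℂ) * ∏ i, Complex.exp (ξ i * x i * Complex.I)) hx
  have hI : ∫ t, g t = ∫ t, f t := by
    have h := H 1 le_rfl fun _ => 0
    simp only [Finset.sum_const_zero, neg_zero, deckFourier_zero, Fin.prod_const, pow_one] at h
    norm_cast at h
    nlinarith [integral_nonneg (μ := volume) (f := f) hf0,
      integral_nonneg (μ := volume) (f := g) hg0]
  by_cases hz : ∫ t, f t = 0
  · have hf' := (integral_eq_zero_iff_of_nonneg hf0 hf).1 hz
    have hg' := (integral_eq_zero_iff_of_nonneg hg0 hg).1 (hI.trans hz)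
    refine ⟨0, ?_⟩
    filter_upwards [hf', hg'] with x h1 h2
    rw [sub_zero, h1, h2]
  · obtain ⟨a, ha⟩ := exists_phase (deckFourier_continuous hf hf0)
      (deckFourier_continuous hg hg0) (by rw [deckFourier_zero]; exact_mod_cast hz)
      (by rw [deckFourier_zero, deckFourier_zero, hI]) (deckFourier_neg hf hf0)
      (deckFourier_neg hg hg0) H
    refine ⟨a, ae_eq_of_deckFourier_eq hg (hf.comp_sub_right a) hg0 (fun t => hf0 _) fun ξ => ?_⟩
    rw [ha, deckFourier_translate]
end

section
/- Let E be an open subset of ℝ of finite measure with lower bounded gaps, and let F be a measurable set of finite measure with the same 3-deck as E (N_F = N_E almost everywhere). Then F is a translate of E up to a set of measure zero. -/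
/-!
For small `x > 0` put `E_x = E ∩ (E - x)` and `F_x = F ∩ (F - x)`.

* Taking the Fourier transform of the 3-deck `N(x, y)` in `y` turns it into `Ê_x(-η) Ê(η)`, and a
  further transform in `x` gives the bispectrum `Ê(-ξ-η) Ê(ξ) Ê(η)` (`corr_meas`, `corr_cap`).
  Both are therefore the same for `E` and `F`.
* As `Ê(0) = |E| > 0`, equality of the bispectra near `0` forces `F̂(ξ) = exp (i a ξ) Ê(ξ)` for one
  real `a`, at least along a sequence tending to `0` (`phase`). The first identity then gives
  `Ê_x(-ξ) = exp (i a ξ) F̂_x(-ξ)` along the same sequence, for almost every `x`.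
* If `x` is less than the gap bound, then `E_x ⊆ E - s` for `0 < s < x`, so `N(x, s)` does not
  depend on `s ∈ (0, x)`. This passes to `F`, and it makes both `E_x` and `F_x` essentially bounded
  (`bounded_cap`): almost every point of `F_x` starts an interval of length `x` almost entirely
  contained in `F`, and `F` has finite measure.
* Hence `Ê_x` and `F̂_x` are entire, the relation between them holds at every frequency, and `F_x`
  is the translate of `E_x` by `a` (`translate_of_frequently`). Letting `x` tend to `0`
  gives the same for `F` and `E`.
-/

open MeasureTheory

open Filter Topology

namespace ThreeDeck

/-- `cap A x` is `A ∩ (A - x)`: the points `t` of `A` whose translate `t + x` also lies in `A`. -/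
def cap (A : Set ℝ) (x : ℝ) : Set ℝ := A ∩ {t : ℝ | t + x ∈ A}

/-- `ft A` is the Fourier transform of the indicator of `A`, with the sign and normalisation
`ξ ↦ ∫_A exp (i ξ t) dt` of `charFun`. -/
noncomputable def ft (A : Set ℝ) : ℝ → ℂ := charFun (volume.restrict A)

lemma measurableSet_shift {A : Set ℝ} (hA : MeasurableSet A) (x : ℝ) :
    MeasurableSet {t : ℝ | t + x ∈ A} := (measurable_add_const x) hA

lemma measurableSet_cap {A : Set ℝ} (hA : MeasurableSet A) (x : ℝ) :
    MeasurableSet (cap A x) := hA.inter (measurableSet_shift hA x)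

lemma cap_subset (A : Set ℝ) (x : ℝ) : cap A x ⊆ A := Set.inter_subset_left

/-! ### Fourier transform of correlations -/

/-- The Fourier transform of a correlation is the product of the Fourier transforms, one of them
evaluated at the opposite frequency. -/
lemma corr (f g : ℝ → ℂ) (hf : Integrable f) (hg : Integrable g) (η : ℝ) :
    ∫ y, (∫ t, f t * g (t + y)) * Complex.exp (η * y * Complex.I) =
      (∫ t, f t * Complex.exp (-η * t * Complex.I)) *
        ∫ s, g s * Complex.exp (η * s * Complex.I) := by
  have hexp : ∀ c : ℂ, ∀ r : ℝ, c = r → ∀ h : ℝ → ℂ, Integrable h →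
      Integrable (fun t : ℝ => h t * Complex.exp (c * t * Complex.I)) := by
    intro c r hc h hh
    refine hh.mul_bdd (c := 1) (by fun_prop) (Eventually.of_forall fun t => ?_)
    rw [hc, ← Complex.ofReal_mul, Complex.norm_exp_ofReal_mul_I]
  have hf' := hexp (-η) (-η) (by push_cast; rfl) f hf
  have hg' := hexp η η rfl g hg
  have hprod := hf'.mul_prod hg'
  have hshear := (measurePreserving_prod_add (volume : Measure ℝ)
    (volume : Measure ℝ)).integrable_comp_of_integrable hprod
  have hsplit : ∀ t y : ℝ, (f t * Complex.exp (-η * t * Complex.I)) *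
      (g (t + y) * Complex.exp (η * (t + y : ℝ) * Complex.I)) =
      f t * g (t + y) * Complex.exp (η * y * Complex.I) := by
    intro t y
    have : Complex.exp (-η * t * Complex.I) * Complex.exp (η * (t + y : ℝ) * Complex.I) =
        Complex.exp (η * y * Complex.I) := by
      rw [← Complex.exp_add]; congr 1; push_cast; ring
    rw [← this]; ring
  have hint : Integrable (Function.uncurry fun t y : ℝ =>
      f t * g (t + y) * Complex.exp (η * y * Complex.I)) (volume.prod volume) := by
    refine hshear.congr (Eventually.of_forall fun z => ?_)
    exact hsplit z.1 z.2
  calc _ = ∫ y, ∫ t, f t * g (t + y) * Complex.exp (η * y * Complex.I) := by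
        simp_rw [integral_mul_const]
    _ = ∫ t, ∫ y, f t * g (t + y) * Complex.exp (η * y * Complex.I) :=
        (integral_integral_swap hint).symm
    _ = ∫ t, (f t * Complex.exp (-η * t * Complex.I)) *
          ∫ s, g s * Complex.exp (η * s * Complex.I) := by
        refine integral_congr_ae (Eventually.of_forall fun t => ?_)
        simp only
        simp_rw [← hsplit, integral_const_mul]
        congr 1
        exact integral_add_left_eq_self (μ := volume)
          (fun s : ℝ => g s * Complex.exp (η * s * Complex.I)) t
    _ = _ := by rw [integral_mul_const]

lemma ft_eq {A : Set ℝ} (hA : MeasurableSet A) (η : ℝ) :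
    ft A η = ∫ t, A.indicator (fun _ => (1 : ℂ)) t * Complex.exp (η * t * Complex.I) := by
  rw [ft, charFun_apply_real, ← integral_indicator hA]
  refine integral_congr_ae (Eventually.of_forall fun t => ?_)
  by_cases h : t ∈ A <;> simp [h]

lemma integrable_ind {A : Set ℝ} (hA : MeasurableSet A) (hfin : volume A < ⊤) :
    Integrable (A.indicator (fun _ => (1 : ℂ))) := by
  rw [integrable_indicator_iff hA]
  exact integrableOn_const hfin.ne

lemma corr_meas {A B : Set ℝ} (hA : MeasurableSet A) (hB : MeasurableSet B)
    (hAf : volume A < ⊤) (hBf : volume B < ⊤) (η : ℝ) :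
    ∫ y, (volume.real (B ∩ {t : ℝ | t + y ∈ A}) : ℂ) * Complex.exp (η * y * Complex.I) =
      ft B (-η) * ft A η := by
  rw [ft_eq hA, ft_eq hB]
  push_cast
  rw [← corr _ _ (integrable_ind hB hBf) (integrable_ind hA hAf)]
  refine integral_congr_ae (Eventually.of_forall fun y => ?_)
  simp only
  congr 1
  have hm := hB.inter (measurableSet_shift hA y)
  have : ∀ t, B.indicator (fun _ => (1 : ℂ)) t * A.indicator (fun _ => (1 : ℂ)) (t + y) =
      (B ∩ {t : ℝ | t + y ∈ A}).indicator (fun _ => (1 : ℂ)) t := by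
    intro t
    by_cases h1 : t ∈ B <;> by_cases h2 : t + y ∈ A <;> simp [h1, h2]
  simp_rw [this]
  rw [integral_indicator hm]
  simp

lemma corr_cap {A : Set ℝ} (hA : MeasurableSet A) (hAf : volume A < ⊤) (ξ η : ℝ) :
    ∫ x, ft (cap A x) (-η) * Complex.exp (ξ * x * Complex.I) =
      ft A (-(ξ + η)) * ft A ξ := by
  have hint : Integrable (fun t : ℝ => A.indicator (fun _ => (1 : ℂ)) t *
      Complex.exp (-η * t * Complex.I)) := by
    refine (integrable_ind hA hAf).mul_bdd (c := 1) (by fun_prop)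
      (Eventually.of_forall fun t => ?_)
    rw [← Complex.ofReal_neg, ← Complex.ofReal_mul, Complex.norm_exp_ofReal_mul_I]
  have key := corr _ _ hint (integrable_ind hA hAf) ξ
  rw [ft_eq hA, ft_eq hA]
  convert key using 2
  · refine funext fun x => ?_
    congr 1
    rw [ft_eq (measurableSet_cap hA x)]
    refine integral_congr_ae (Eventually.of_forall fun t => ?_)
    by_cases h1 : t ∈ A <;> by_cases h2 : t + x ∈ A <;> simp [cap, h1, h2]
  · refine integral_congr_ae (Eventually.of_forall fun t => ?_)
    simp only
    rw [mul_assoc (A.indicator (fun _ => (1 : ℂ)) t), ← Complex.exp_add]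
    congr 2
    push_cast
    ring

/-! ### The phase relating two transforms with equal bispectrum -/

/-- Two continuous Hermitian functions with the same bispectrum, one positive at `0`, differ along a
sequence tending to `0` by the phase of a translation. It suffices to look at the points
`r / 2 ^ n`: the quotient `u` has modulus one and satisfies `u (2 ξ) = u ξ ^ 2`, and near `0` its
real part is positive, which selects the square root. -/
lemma phase (φ ψ : ℝ → ℂ) (hφ : Continuous φ) (hψ : Continuous ψ) (m m' : ℝ) (hm : 0 < m)
    (hφ0 : φ 0 = m) (hψ0 : ψ 0 = m')
    (hφc : ∀ ξ, φ (-ξ) = (starRingEnd ℂ) (φ ξ)) (hψc : ∀ ξ, ψ (-ξ) = (starRingEnd ℂ) (ψ ξ))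
    (hT : ∀ ξ η, φ (-(ξ + η)) * φ ξ * φ η = ψ (-(ξ + η)) * ψ ξ * ψ η) :
    ∃ a : ℝ, ∃ᶠ ξ : ℝ in 𝓝[≠] 0, φ ξ ≠ 0 ∧
      ψ ξ = Complex.exp ((a * ξ : ℝ) * Complex.I) * φ ξ := by
  have hmm : m' = m := by
    have h := hT 0 0
    simp only [add_zero, neg_zero, hφ0, hψ0] at h
    have h3 : m ^ 3 = m' ^ 3 := by
      have : ((m ^ 3 : ℝ) : ℂ) = ((m' ^ 3 : ℝ) : ℂ) := by
        push_cast; linear_combination h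
      exact_mod_cast this
    exact ((Odd.strictMono_pow (by decide : Odd 3)).injective h3).symm
  subst hmm
  have hmC : (m' : ℂ) ≠ 0 := by exact_mod_cast hm.ne'
  have hnorm : ∀ ξ, φ ξ * φ (-ξ) = ψ ξ * ψ (-ξ) := by
    intro ξ
    have h := hT ξ 0
    rw [add_zero, hφ0, hψ0] at h
    have := mul_right_cancel₀ hmC h
    linear_combination this
  have hφne : ∀ᶠ ξ in 𝓝 (0 : ℝ), φ ξ ≠ 0 :=
    hφ.continuousAt.eventually_ne (by rw [hφ0]; exact hmC)
  set u : ℝ → ℂ := fun ξ => ψ ξ / φ ξ with hu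
  have hucont : Tendsto u (𝓝 0) (𝓝 1) := by
    have : Tendsto u (𝓝 0) (𝓝 (ψ 0 / φ 0)) :=
      (hψ.tendsto 0).div (hφ.tendsto 0) (by rw [hφ0]; exact hmC)
    rwa [hφ0, hψ0, div_self hmC] at this
  have hure : ∀ᶠ ξ in 𝓝 (0 : ℝ), 0 < (u ξ).re := by
    have := (Complex.continuous_re.tendsto 1).comp hucont
    exact this.eventually (lt_mem_nhds (by simp))
  obtain ⟨ρ, hρ, hball⟩ := Metric.eventually_nhds_iff.1 (hφne.and hure)
  set r : ℝ := ρ / 2 with hr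
  have hrpos : 0 < r := by positivity
  have hgood : ∀ n : ℕ, φ (r / 2 ^ n) ≠ 0 ∧ 0 < (u (r / 2 ^ n)).re := by
    intro n
    refine hball ?_
    rw [Real.dist_eq, sub_zero, abs_of_pos (by positivity)]
    calc r / 2 ^ n ≤ r := div_le_self hrpos.le (one_le_pow₀ (by norm_num))
      _ < ρ := by rw [hr]; linarith
  have hunit : ∀ ξ, φ ξ ≠ 0 → ‖u ξ‖ = 1 := by
    intro ξ h
    have h2 := hnorm ξ
    rw [hφc, hψc, Complex.mul_conj, Complex.mul_conj] at h2
    have h3 : Complex.normSq (φ ξ) = Complex.normSq (ψ ξ) := by exact_mod_cast h2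
    rw [Complex.normSq_eq_norm_sq, Complex.normSq_eq_norm_sq] at h3
    have h4 : ‖φ ξ‖ = ‖ψ ξ‖ := by
      rwa [sq_eq_sq₀ (norm_nonneg _) (norm_nonneg _)] at h3
    rw [hu]
    simp only [norm_div, h4]
    exact div_self (by rw [← h4]; exact norm_ne_zero_iff.2 h)
  have hsq : ∀ ξ, φ ξ ≠ 0 → φ (ξ + ξ) ≠ 0 → u ξ ^ 2 = u (ξ + ξ) := by
    intro ξ h1 h2
    have hψne : ψ (ξ + ξ) ≠ 0 := by
      intro h
      have := hunit _ h2
      simp [hu, h] at this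
    have ht := hT ξ ξ
    have hn := hnorm (ξ + ξ)
    simp only [hu]
    rw [div_pow, div_eq_div_iff (pow_ne_zero _ h1) h2]
    have hneg : φ (-(ξ + ξ)) ≠ 0 := by
      rw [hφc]; simpa using h2
    refine mul_left_cancel₀ hneg ?_
    linear_combination ψ ξ ^ 2 * hn - ψ (ξ + ξ) * ht
  set θ : ℝ := Complex.arg (u r) with hθ
  have hur : ‖u r‖ = 1 := hunit r (by simpa using (hgood 0).1)
  have hθabs : |θ| < Real.pi / 2 := by
    rw [hθ, Complex.abs_arg_lt_pi_div_two_iff]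
    left; simpa using (hgood 0).2
  have hind : ∀ n : ℕ, u (r / 2 ^ n) = Complex.exp ((θ / 2 ^ n : ℝ) * Complex.I) := by
    intro n
    induction n with
    | zero =>
      have := Complex.norm_mul_exp_arg_mul_I (u r)
      rw [hur] at this
      simpa [hθ] using this.symm
    | succ n ih =>
      have hd : r / 2 ^ (n + 1) + r / 2 ^ (n + 1) = r / 2 ^ n := by
        rw [pow_succ]; field_simp; norm_num
      have h2 := hsq (r / 2 ^ (n + 1)) (hgood _).1 (by rw [hd]; exact (hgood n).1)
      rw [hd, ih] at h2
      set w := Complex.exp ((θ / 2 ^ (n + 1) : ℝ) * Complex.I) with hw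
      have hw2 : w ^ 2 = Complex.exp ((θ / 2 ^ n : ℝ) * Complex.I) := by
        rw [hw, ← Complex.exp_nat_mul]
        congr 1
        push_cast
        rw [pow_succ]
        field_simp
      rw [← hw2] at h2
      rcases sq_eq_sq_iff_eq_or_eq_neg.1 h2 with h | h
      · exact h
      · -- The other square root has negative real part.
        exfalso
        have hpos := (hgood (n + 1)).2
        rw [h, Complex.neg_re, hw, Complex.exp_ofReal_mul_I_re] at hpos
        have hle : |θ / 2 ^ (n + 1)| < Real.pi / 2 := by
          rw [abs_div, abs_of_pos (by positivity : (0 : ℝ) < 2 ^ (n + 1))]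
          exact (div_le_self (abs_nonneg _) (one_le_pow₀ (by norm_num))).trans_lt hθabs
        have := Real.cos_pos_of_mem_Ioo ⟨(abs_lt.1 hle).1, (abs_lt.1 hle).2⟩
        linarith
  refine ⟨θ / r, ?_⟩
  have hlim : Tendsto (fun n : ℕ => r / 2 ^ n) atTop (𝓝[≠] 0) := by
    refine tendsto_nhdsWithin_iff.2 ⟨?_, Eventually.of_forall fun n => ?_⟩
    · exact tendsto_const_nhds.div_atTop (tendsto_pow_atTop_atTop_of_one_lt (by norm_num))
    · exact (div_pos hrpos (by positivity)).ne'
  refine hlim.frequently (Eventually.frequently (Eventually.of_forall fun n => ?_))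
  refine ⟨(hgood n).1, ?_⟩
  have h := hind n
  simp only [hu] at h
  rw [div_eq_iff (hgood n).1] at h
  rw [h]
  congr 4
  field_simp

/-! ### Uniqueness for bounded sets -/

/-- The Fourier transform of an essentially bounded set extends to an entire function. -/
lemma analytic_mgf {G : Set ℝ} (hGf : volume G < ⊤) (R : ℝ)
    (hR : ∀ᵐ t, t ∈ G → |t| ≤ R) (hG : MeasurableSet G) :
    AnalyticOnNhd ℂ (ProbabilityTheory.complexMGF id (volume.restrict G)) Set.univ := by
  have huniv : ProbabilityTheory.integrableExpSet id (volume.restrict G) = Set.univ := by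
    refine Set.eq_univ_of_forall fun s => ?_
    have : IsFiniteMeasure (volume.restrict G) := ⟨by simpa using hGf⟩
    show Integrable (fun t : ℝ => Real.exp (s * id t)) (volume.restrict G)
    refine Integrable.of_bound (C := Real.exp (|s| * R)) (by fun_prop) ?_
    rw [ae_restrict_iff' hG]
    filter_upwards [hR] with t ht htG
    rw [Real.norm_eq_abs, Real.abs_exp, Real.exp_le_exp]
    calc s * id t ≤ |s * t| := le_abs_self _
      _ = |s| * |t| := abs_mul _ _
      _ ≤ |s| * R := mul_le_mul_of_nonneg_left (ht htG) (abs_nonneg _)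
  have := ProbabilityTheory.analyticOnNhd_complexMGF (X := id) (μ := volume.restrict G)
  simpa [huniv] using this

/-- Essentially bounded sets whose transforms differ by the phase of a translation at points
accumulating at `0` are translates of each other: by analyticity the relation holds at every
frequency. -/
lemma translate_of_frequently {G H : Set ℝ} (hG : MeasurableSet G) (hH : MeasurableSet H)
    (hGf : volume G < ⊤) (hHf : volume H < ⊤) (R R' : ℝ)
    (hR : ∀ᵐ t, t ∈ G → |t| ≤ R) (hR' : ∀ᵐ t, t ∈ H → |t| ≤ R') (a : ℝ)
    (hfreq : ∃ᶠ ξ : ℝ in 𝓝[≠] 0,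
      ft G (-ξ) = ft H (-ξ) * Complex.exp ((a * ξ : ℝ) * Complex.I)) :
    volume (symmDiff H {x : ℝ | x - a ∈ G}) = 0 := by
  have hmgf : ∀ (A : Set ℝ) (ξ : ℝ),
      ProbabilityTheory.complexMGF id (volume.restrict A) (ξ * Complex.I) = ft A ξ := by
    intro A ξ
    rw [ProbabilityTheory.complexMGF_mul_I aemeasurable_id, Measure.map_id, ft]
  have hGa := analytic_mgf hGf R hR hG
  have hHa := analytic_mgf hHf R' hR' hH
  have hGa' : AnalyticOnNhd ℂ (fun z => ProbabilityTheory.complexMGF id (volume.restrict G) z *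
      Complex.exp (a * z)) Set.univ := by
    refine hGa.mul ?_
    intro z _
    fun_prop
  have hlim : Tendsto (fun ξ : ℝ => ((-ξ : ℝ) : ℂ) * Complex.I) (𝓝[≠] 0) (𝓝[≠] 0) := by
    refine tendsto_nhdsWithin_iff.2 ⟨?_, ?_⟩
    · have : Continuous (fun ξ : ℝ => ((-ξ : ℝ) : ℂ) * Complex.I) := by fun_prop
      have h := this.tendsto 0
      simp only [neg_zero, Complex.ofReal_zero, zero_mul] at h
      exact h.mono_left nhdsWithin_le_nhds
    · filter_upwards [self_mem_nhdsWithin] with ξ hξ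
      simpa using hξ
  have heq := AnalyticOnNhd.eq_of_frequently_eq hHa hGa' (z₀ := 0) (by
    refine hlim.frequently (hfreq.mono fun ξ hξ => ?_)
    rw [hmgf, hmgf, hξ, mul_assoc, ← Complex.exp_add]
    have : ((a * ξ : ℝ) : ℂ) * Complex.I + a * (((-ξ : ℝ) : ℂ) * Complex.I) = 0 := by
      push_cast; ring
    rw [this, Complex.exp_zero, mul_one])
  have : IsFiniteMeasure (volume.restrict G) := ⟨by simpa using hGf⟩
  have : IsFiniteMeasure (volume.restrict H) := ⟨by simpa using hHf⟩
  have hGm : MeasurableSet {x : ℝ | x - a ∈ G} := (measurable_sub_const a) hG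
  have hmeas : volume.restrict H = Measure.map (fun x => x + a) (volume.restrict G) := by
    refine Measure.ext_of_charFun (funext fun ξ => ?_)
    rw [charFun_map_add_const]
    have := congrFun heq (ξ * Complex.I)
    rw [hmgf, hmgf, ft, ft] at this
    rw [this]
    congr 2
    simp
    ring
  have hmap : Measure.map (fun x => x + a) (volume.restrict G) =
      volume.restrict {x : ℝ | x - a ∈ G} := by
    have h := (measurePreserving_add_right (volume : Measure ℝ) a).restrict_preimage hGm
    have hpre : (fun x : ℝ => x + a) ⁻¹' {x : ℝ | x - a ∈ G} = G := by
      ext x; simp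
    rw [hpre] at h
    exact h.map_eq
  rw [hmap] at hmeas
  rw [measure_symmDiff_eq_zero_iff]
  have hdiff : ∀ {A B : Set ℝ}, MeasurableSet B → volume.restrict A = volume.restrict B →
      volume (A \ B) = 0 := by
    intro A B hB h
    have h' := congrArg (fun μ : Measure ℝ => μ Bᶜ) h
    simp only [Measure.restrict_apply hB.compl, Set.compl_inter_self, measure_empty] at h'
    rwa [Set.inter_comm, ← Set.sdiff_eq] at h'
  exact ae_eq_set.2 ⟨hdiff hGm hmeas, hdiff hH hmeas.symm⟩

/-! ### Continuity of translation and essential boundedness -/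

lemma tendsto_shift {A : Set ℝ} (hA : MeasurableSet A) (hAf : volume A < ⊤) :
    Tendsto (fun s : ℝ => volume (A \ {t : ℝ | t + s ∈ A})) (𝓝 0) (𝓝 0) := by
  let f : ℝ → C(ℝ, ℝ) := fun s => ⟨fun t => t + s, by fun_prop⟩
  have hf : Continuous f := by
    refine ContinuousMap.continuous_of_continuous_uncurry _ ?_
    show Continuous (fun p : ℝ × ℝ => p.2 + p.1)
    fun_prop
  have hmp : ∀ s, MeasurePreserving (f s) volume volume :=
    fun s => measurePreserving_add_right volume s
  have := tendsto_measure_symmDiff_preimage_nhds_zero (hf.tendsto 0)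
    (Eventually.of_forall hmp) (hmp 0) hA.nullMeasurableSet hAf.ne
  refine tendsto_of_tendsto_of_tendsto_of_le_of_le tendsto_const_nhds this
    (fun _ => zero_le) (fun s => measure_mono ?_)
  intro t ht
  refine Or.inr ⟨?_, ht.2⟩
  simpa [f] using ht.1

/-- If `|A ∩ (A - x) ∩ (A - s)|` does not depend on `s ∈ (0, x)`, then almost every point of
`A ∩ (A - x)` starts an interval of length `x` that is almost entirely contained in `A`. As `A`
has finite measure, such intervals cannot reach arbitrarily far. -/
lemma bounded_cap {A : Set ℝ} (hA : MeasurableSet A) (hAf : volume A < ⊤) {x : ℝ} (hx : 0 < x)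
    (c : ENNReal)
    (hc : ∀ᵐ s, s ∈ Set.Ioo 0 x → volume (cap A x ∩ {t : ℝ | t + s ∈ A}) = c) :
    ∃ R : ℝ, ∀ᵐ t, t ∈ cap A x → |t| ≤ R := by
  have hcapm := measurableSet_cap hA x
  have hcapf : volume (cap A x) < ⊤ := (measure_mono (cap_subset A x)).trans_lt hAf
  -- Letting `s` tend to `0` identifies the constant.
  have hcle : volume (cap A x) ≤ c := by
    by_contra! hlt
    have hpos : 0 < volume (cap A x) - c := tsub_pos_of_lt hlt
    have hev := (tendsto_shift hA hAf).eventually (gt_mem_nhds hpos)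
    obtain ⟨ρ, hρ, hball⟩ := Metric.eventually_nhds_iff.1 hev
    obtain ⟨s, hs, hsc⟩ := (Measure.dense_of_ae hc).inter_open_nonempty
      (Set.Ioo 0 (min ρ x)) isOpen_Ioo (Set.nonempty_Ioo.2 (lt_min hρ hx))
    have h1 := hball (y := s) (by
      rw [Real.dist_eq, sub_zero, abs_of_pos hs.1]
      exact hs.2.trans_le (min_le_left _ _))
    have h2 := hsc ⟨hs.1, hs.2.trans_le (min_le_right _ _)⟩
    have h3 : volume (cap A x) ≤ c + volume (A \ {t : ℝ | t + s ∈ A}) := by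
      rw [← h2, ← measure_inter_add_sdiff (cap A x) (measurableSet_shift hA s)]
      gcongr
      exact cap_subset A x
    have h4 : c + volume (A \ {t : ℝ | t + s ∈ A}) < c + (volume (cap A x) - c) :=
      ENNReal.add_lt_add_left hlt.ne_top h1
    rw [add_tsub_cancel_of_le hlt.le] at h4
    exact (h3.trans_lt h4).false
  have hts : ∀ᵐ s : ℝ, ∀ᵐ t : ℝ, s ∈ Set.Ioo 0 x → t ∈ cap A x → t + s ∈ A := by
    filter_upwards [hc] with s hs
    by_cases hsI : s ∈ Set.Ioo 0 x
    · have h0 : volume (cap A x \ {t : ℝ | t + s ∈ A}) = 0 := by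
        have h := measure_inter_add_sdiff (μ := volume) (cap A x) (measurableSet_shift hA s)
        have h1 := hs hsI
        have hcne : c ≠ ⊤ := by
          rw [← h1]
          exact ((measure_mono Set.inter_subset_left).trans_lt hcapf).ne
        rw [h1] at h
        have h2 : c + volume (cap A x \ {t : ℝ | t + s ∈ A}) ≤ c + 0 := by
          rw [h, add_zero]; exact hcle
        exact le_antisymm ((ENNReal.add_le_add_iff_left hcne).1 h2) zero_le
      filter_upwards [measure_eq_zero_iff_ae_notMem.1 h0] with t ht _ htc
      by_contra hn
      exact ht ⟨htc, hn⟩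
    · exact Eventually.of_forall fun t h => absurd h hsI
  have hmeas : MeasurableSet {p : ℝ × ℝ | p.1 ∈ Set.Ioo 0 x → p.2 ∈ cap A x → p.2 + p.1 ∈ A} := by
    have h1 : MeasurableSet {p : ℝ × ℝ | p.1 ∈ Set.Ioo 0 x} := measurable_fst measurableSet_Ioo
    have h2 : MeasurableSet {p : ℝ × ℝ | p.2 ∈ cap A x} := measurable_snd hcapm
    have h3 : MeasurableSet {p : ℝ × ℝ | p.2 + p.1 ∈ A} :=
      (measurable_snd.add measurable_fst) hA
    exact h1.imp (h2.imp h3)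
  have hst := (Measure.ae_ae_comm
    (p := fun s t : ℝ => s ∈ Set.Ioo 0 x → t ∈ cap A x → t + s ∈ A) hmeas).1 hts
  obtain ⟨n, hn⟩ : ∃ n : ℕ, volume (A ∩ {y : ℝ | (n : ℝ) < |y|}) < ENNReal.ofReal x := by
    have hanti : Antitone (fun n : ℕ => A ∩ {y : ℝ | (n : ℝ) < |y|}) := by
      intro i j hij y hy
      have hij' : (i : ℝ) ≤ j := by exact_mod_cast hij
      exact ⟨hy.1, lt_of_le_of_lt hij' hy.2⟩
    have ht := tendsto_measure_iInter_atTop (μ := (volume : Measure ℝ))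
      (s := fun n : ℕ => A ∩ {y : ℝ | (n : ℝ) < |y|})
      (fun n => (hA.inter (measurableSet_lt measurable_const
        continuous_abs.measurable)).nullMeasurableSet) hanti
      ⟨0, ((measure_mono Set.inter_subset_left).trans_lt hAf).ne⟩
    have hempty : (⋂ n : ℕ, A ∩ {y : ℝ | (n : ℝ) < |y|}) = ∅ := by
      refine Set.eq_empty_of_forall_notMem fun y hy => ?_
      obtain ⟨n, hn⟩ := exists_nat_ge |y|
      exact absurd (Set.mem_iInter.1 hy n).2 (not_lt.2 hn)
    rw [hempty, measure_empty] at ht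
    exact (ht.eventually (gt_mem_nhds (ENNReal.ofReal_pos.2 hx))).exists
  refine ⟨n + x, ?_⟩
  filter_upwards [hst] with t ht htc
  by_contra! hbig
  have h0 : volume (Set.Ioo t (t + x) \ A) = 0 := by
    have hz : volume {s : ℝ | ¬ (s ∈ Set.Ioo 0 x → t ∈ cap A x → t + s ∈ A)} = 0 := ht
    have := measure_preimage_add (volume : Measure ℝ) t (Set.Ioo t (t + x) \ A)
    rw [← this]
    refine measure_mono_null ?_ hz
    intro s hs
    have h1 : t < t + s ∧ t + s < t + x := hs.1
    simp only [Set.mem_ofPred_eq]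
    intro h
    exact hs.2 (h ⟨by linarith [h1.1], by linarith [h1.2]⟩ htc)
  have hfar : Set.Ioo t (t + x) ⊆ {y : ℝ | (n : ℝ) < |y|} := by
    intro y hy
    simp only [Set.mem_ofPred_eq]
    rcases lt_abs.1 hbig with h | h
    · exact lt_abs.2 (Or.inl (by linarith [hy.1]))
    · exact lt_abs.2 (Or.inr (by linarith [hy.2]))
  have hvol : volume (Set.Ioo t (t + x)) ≤ volume (A ∩ {y : ℝ | (n : ℝ) < |y|}) := by
    rw [← measure_inter_add_sdiff _ hA, h0, add_zero]
    exact measure_mono fun y hy => ⟨hy.2, hfar hy.1⟩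
  rw [Real.volume_Ioo, add_sub_cancel_left] at hvol
  exact (hvol.trans_lt hn).false

/-- If the gaps are at least `δ`, two points of the set at distance less than `δ` lie in the same
component, together with everything between them. -/
lemma gap_convex {α β : ℤ → ℝ} (hαβ : ∀ k : ℤ, α k < β k ∧ β k < α (k + 1)) {δ : ℝ}
    (hgap : ∀ k : ℤ, δ ≤ α (k + 1) - β k) {x s t : ℝ} (hx : x < δ) (hs : s ∈ Set.Ioo 0 x)
    (ht : t ∈ ⋃ k : ℤ, Set.Ioo (α k) (β k)) (htx : t + x ∈ ⋃ k : ℤ, Set.Ioo (α k) (β k)) :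
    t + s ∈ ⋃ k : ℤ, Set.Ioo (α k) (β k) := by
  obtain ⟨k, hk1, hk2⟩ := Set.mem_iUnion.1 ht
  obtain ⟨j, hj1, hj2⟩ := Set.mem_iUnion.1 htx
  have hmono : Monotone α :=
    monotone_int_of_le_succ fun k => ((hαβ k).1.trans (hαβ k).2).le
  obtain ⟨hs0, hsx⟩ := hs
  rcases lt_trichotomy j k with h | h | h
  · have := hmono (Int.add_one_le_iff.2 h)
    have := (hαβ j).2
    linarith
  · subst h
    exact Set.mem_iUnion.2 ⟨j, by linarith, by linarith⟩
  · have := hmono (Int.add_one_le_iff.2 h)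
    have := hgap k
    linarith

end ThreeDeck

open ThreeDeck

/-- an open set `E ⊆ ℝ` of finite measure with lower bounded gaps
is determined, up to translation and null sets, by its 3-deck among measurable
sets of finite measure. -/
theorem open_set_lower_bounded_gaps_determined_by_3deck
    (E : Set ℝ) (hEfin : volume E < ⊤)
    (α β : ℤ → ℝ) (hαβ : ∀ k : ℤ, α k < β k ∧ β k < α (k + 1))
    (hE : E = ⋃ k : ℤ, Set.Ioo (α k) (β k))
    (hgap : ∃ δ > (0 : ℝ), ∀ k : ℤ, δ ≤ α (k + 1) - β k)
    (F : Set ℝ) (hF : MeasurableSet F) (hFfin : volume F < ⊤)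
    (hN : ∀ᵐ p : ℝ × ℝ,
      volume (E ∩ {t : ℝ | t + p.1 ∈ E} ∩ {t : ℝ | t + p.2 ∈ E}) =
      volume (F ∩ {t : ℝ | t + p.1 ∈ F} ∩ {t : ℝ | t + p.2 ∈ F})) :
    ∃ a : ℝ, volume (symmDiff F {x : ℝ | x - a ∈ E}) = 0 := by
  obtain ⟨δ, hδ, hgap⟩ := hgap
  have hEm : MeasurableSet E := by
    rw [hE]; exact MeasurableSet.iUnion fun k => measurableSet_Ioo
  have hcapfin : ∀ {A : Set ℝ}, volume A < ⊤ → ∀ x, volume (cap A x) < ⊤ :=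
    fun h x => (measure_mono (cap_subset _ x)).trans_lt h
  have hN' : ∀ᵐ x : ℝ, ∀ᵐ y : ℝ, volume (cap E x ∩ {t : ℝ | t + y ∈ E}) =
      volume (cap F x ∩ {t : ℝ | t + y ∈ F}) := Measure.ae_ae_of_ae_prod hN
  have hcross : ∀ᵐ x : ℝ, ∀ η : ℝ,
      ft (cap E x) (-η) * ft E η = ft (cap F x) (-η) * ft F η := by
    filter_upwards [hN'] with x hx η
    rw [← corr_meas hEm (measurableSet_cap hEm x) hEfin (hcapfin hEfin x),
      ← corr_meas hF (measurableSet_cap hF x) hFfin (hcapfin hFfin x)]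
    refine integral_congr_ae ?_
    filter_upwards [hx] with y hy
    simp only [Measure.real, hy]
  have hT : ∀ ξ η : ℝ, ft E (-(ξ + η)) * ft E ξ * ft E η =
      ft F (-(ξ + η)) * ft F ξ * ft F η := by
    intro ξ η
    rw [← corr_cap hEm hEfin, ← corr_cap hF hFfin, ← integral_mul_const, ← integral_mul_const]
    refine integral_congr_ae ?_
    filter_upwards [hcross] with x hx
    linear_combination Complex.exp (ξ * x * Complex.I) * hx η
  have : IsFiniteMeasure (volume.restrict E) := ⟨by simpa using hEfin⟩
  have : IsFiniteMeasure (volume.restrict F) := ⟨by simpa using hFfin⟩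
  have hEpos : 0 < (volume.restrict E).real Set.univ := by
    rw [measureReal_def, Measure.restrict_apply_univ]
    refine ENNReal.toReal_pos (ne_of_gt ?_) hEfin.ne
    calc 0 < volume (Set.Ioo (α 0) (β 0)) := by
          rw [Real.volume_Ioo]; exact ENNReal.ofReal_pos.2 (sub_pos.2 (hαβ 0).1)
      _ ≤ volume E := measure_mono (by
          rw [hE]; exact Set.subset_iUnion (fun k : ℤ => Set.Ioo (α k) (β k)) 0)
  obtain ⟨a, ha⟩ := phase (ft E) (ft F) continuous_charFun continuous_charFun _ _ hEpos
    (charFun_zero _) (charFun_zero _) (fun ξ => charFun_neg ξ) (fun ξ => charFun_neg ξ) hT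
  refine ⟨a, ?_⟩
  have hcapE : ∀ x < δ, ∀ s ∈ Set.Ioo 0 x,
      volume (cap E x ∩ {t : ℝ | t + s ∈ E}) = volume (cap E x) := by
    intro x hx s hs
    congr 1
    refine Set.inter_eq_left.2 fun t ht => ?_
    rw [cap, hE] at ht
    rw [hE]
    exact gap_convex hαβ hgap hx hs ht.1 ht.2
  have hcap : ∀ᵐ x : ℝ, x ∈ Set.Ioo 0 δ →
      volume (symmDiff (cap F x) {t : ℝ | t - a ∈ cap E x}) = 0 := by
    filter_upwards [hN', hcross] with x hx hxc hxδ
    obtain ⟨R, hR⟩ := bounded_cap hEm hEfin hxδ.1 (volume (cap E x))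
      (Eventually.of_forall (hcapE x hxδ.2))
    obtain ⟨R', hR'⟩ := bounded_cap hF hFfin hxδ.1 (volume (cap E x)) (by
      filter_upwards [hx] with s hs hsI
      rw [← hs, hcapE x hxδ.2 s hsI])
    refine translate_of_frequently (measurableSet_cap hEm x) (measurableSet_cap hF x)
      (hcapfin hEfin x) (hcapfin hFfin x) R R' hR hR' a (ha.mono fun ξ hξ => ?_)
    have h := hxc ξ
    rw [hξ.2] at h
    refine mul_right_cancel₀ hξ.1 ?_
    rw [h]; ring
  -- Approximate `E` and `F` by `cap E x` and `cap F x` as `x` tends to `0`.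
  by_contra hne
  have hpos : 0 < volume (symmDiff F {x : ℝ | x - a ∈ E}) := pos_iff_ne_zero.2 hne
  have hlim := (tendsto_shift hF hFfin).add (tendsto_shift hEm hEfin)
  rw [add_zero] at hlim
  obtain ⟨ρ, hρ, hball⟩ := Metric.eventually_nhds_iff.1 (hlim.eventually (gt_mem_nhds hpos))
  obtain ⟨x, hx, hxc⟩ := (Measure.dense_of_ae hcap).inter_open_nonempty
    (Set.Ioo 0 (min ρ δ)) isOpen_Ioo (Set.nonempty_Ioo.2 (lt_min hρ hδ))
  have h1 := hball (y := x) (by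
    rw [Real.dist_eq, sub_zero, abs_of_pos hx.1]
    exact hx.2.trans_le (min_le_left _ _))
  have h2 := hxc ⟨hx.1, hx.2.trans_le (min_le_right _ _)⟩
  have h3 : volume {t : ℝ | t - a ∈ E \ {t : ℝ | t + x ∈ E}} =
      volume (E \ {t : ℝ | t + x ∈ E}) :=
    (measurePreserving_sub_right volume a).measure_preimage
      (hEm.diff (measurableSet_shift hEm x)).nullMeasurableSet
  have hsub : symmDiff F {x : ℝ | x - a ∈ E} ⊆
      (F \ {t : ℝ | t + x ∈ F}) ∪ {t : ℝ | t - a ∈ E \ {t : ℝ | t + x ∈ E}} ∪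
        symmDiff (cap F x) {t : ℝ | t - a ∈ cap E x} := by
    intro t ht
    simp only [Set.mem_symmDiff, Set.mem_union, Set.mem_sdiff, Set.mem_ofPred_eq, cap,
      Set.mem_inter_iff] at ht ⊢
    tauto
  have h4 : volume (symmDiff F {x : ℝ | x - a ∈ E}) ≤
      volume (F \ {t : ℝ | t + x ∈ F}) + volume {t : ℝ | t - a ∈ E \ {t : ℝ | t + x ∈ E}} +
        volume (symmDiff (cap F x) {t : ℝ | t - a ∈ cap E x}) :=
    (measure_mono hsub).trans ((measure_union_le _ _).trans (by gcongr; exact measure_union_le _ _))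
  rw [h2, h3, add_zero] at h4
  exact (h4.trans_lt h1).false
end
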